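/- arXiv:2110.07854 — 2 statements merged into one kernel-verified Lean document; each statement's English description precedes it below -/
import Mathlib

section
/- For every prime p and every integer N ≥ 2, the integral 𝒵_N(ℤ_p, s) converges absolutely if and only if s ∈ Ω_N, and in this case 𝒵_N(ℤ_p, s) = p^{Σ_{1≤i<j≤N} s_{ij}} · Σ_{𝔖 ∈ ℛ_N} ∏_{λ ∈ ℬ(𝔖)} (p−1)_{deg_𝔖(λ)−1} / (p^{e_λ(s)} − 1). -/
open MeasureTheory
open scoped LinearAlgebra.Projectivization

namespace LogCoulomb

noncomputable section

/-! ### The projective line over `ℚ_p`, its spherical metric and `PGL₂`-invariant measure -/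

variable (p : ℕ) [Fact p.Prime]

instance : MeasurableSpace ℚ_[p] := borel _
instance : BorelSpace ℚ_[p] := ⟨rfl⟩

/-- The projective line over `ℚ_p`. -/
abbrev P1 := ℙ ℚ_[p] (Fin 2 → ℚ_[p])

instance : TopologicalSpace (P1 p) :=
  inferInstanceAs (TopologicalSpace (Quotient _))

instance : MeasurableSpace (P1 p) := borel _
instance : BorelSpace (P1 p) := ⟨rfl⟩

/-- Spherical distance on homogeneous coordinates:
`δ((x₀,x₁),(y₀,y₁)) = |x₀y₁ - x₁y₀| / (max(|x₀|,|x₁|) ⬝ max(|y₀|,|y₁|))`. -/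
def sdelta (x y : Fin 2 → ℚ_[p]) : ℝ :=
  ‖x 0 * y 1 - x 1 * y 0‖ / (max ‖x 0‖ ‖x 1‖ * max ‖y 0‖ ‖y 1‖)

/-- The spherical metric on `ℙ¹(ℚ_p)`, defined via the canonical representatives. -/
def pdelta (ξ η : P1 p) : ℝ := sdelta p ξ.rep η.rep

open Classical in
/-- The action of a matrix on `ℙ¹(ℚ_p)`: `[x₀:x₁] ↦ [a x₀ + b x₁ : c x₀ + d x₁]`
(well-defined, and given by the first branch of the `if`, whenever `A` is invertible). -/
def mobius (A : Matrix (Fin 2) (Fin 2) ℚ_[p]) (ξ : P1 p) : P1 p :=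
  if h : A.mulVec ξ.rep ≠ 0 then Projectivization.mk ℚ_[p] (A.mulVec ξ.rep) h else ξ

/-- `ν` is invariant under the action of `GL₂(ℤ_p)` on `ℙ¹(ℚ_p)`; membership of the matrix
entries in `ℤ_p`, and invertibility of the matrix over `ℤ_p`, are phrased via the `p`-adic
norm on `ℚ_p`. -/
def IsGLInvariant (ν : Measure (P1 p)) : Prop :=
  ∀ A : Matrix (Fin 2) (Fin 2) ℚ_[p],
    (∀ i j, ‖A i j‖ ≤ 1) → ‖A.det‖ = 1 →
      ∀ M : Set (P1 p), MeasurableSet M → ν (mobius p A '' M) = ν M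

/-- The embedding `ι : ℚ_p → ℙ¹(ℚ_p)`, `x ↦ [x : 1]`. -/
def iota (x : ℚ_[p]) : P1 p :=
  Projectivization.mk ℚ_[p] ![x, 1] (by
    intro h
    have h1 := congrFun h 1
    simp at h1)

/-! ### Canonical partition functions -/

/-- The pairs `(i,j)` with `i < j`. -/
def pairs (N : ℕ) : Finset (Fin N × Fin N) := Finset.univ.filter fun q => q.1 < q.2

/-- The closed unit ball `ℤ_p = R` inside `ℚ_p`. -/
def Zball : Set ℚ_[p] := {x | ‖x‖ ≤ 1}

/-- The open unit ball `pℤ_p = P` inside `ℚ_p`. -/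
def Pball : Set ℚ_[p] := {x | ‖x‖ < 1}

/-- The one-component canonical partition function
`Z_N(X, β) = ∫_{X^N} ∏_{i<j} |x_i - x_j|^β dμ^N` (as a Bochner integral, whether or not it
converges absolutely). -/
def ZN (μ : Measure ℚ_[p]) [SigmaFinite μ] (X : Set ℚ_[p]) (N : ℕ) (β : ℂ) : ℂ :=
  ∫ x : Fin N → ℚ_[p], ∏ q ∈ pairs N, (‖x q.1 - x q.2‖ : ℂ) ^ β
    ∂(Measure.pi fun _ => μ.restrict X)

/-- The multivariate canonical partition function
`𝒵_I(X, s) = ∫_{X^I} ∏_{i<j, i,j ∈ I} |x_i - x_j|^{s_{ij}} dμ^I` for a subset `I ⊆ [N]`. -/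
def ZI (μ : Measure ℚ_[p]) [SigmaFinite μ] (X : Set ℚ_[p]) {N : ℕ} (I : Finset (Fin N))
    (s : Fin N → Fin N → ℂ) : ℂ :=
  ∫ x : I → ℚ_[p],
    ∏ q ∈ Finset.univ.filter (fun q : (↥I) × (↥I) => (q.1 : Fin N) < (q.2 : Fin N)),
      (‖x q.1 - x q.2‖ : ℂ) ^ s q.1.1 q.2.1
    ∂(Measure.pi fun _ => μ.restrict X)

/-- The multivariate canonical partition function
`𝒵_N(ℙ¹(ℚ_p), s) = ∫_{(ℙ¹(ℚ_p))^N} ∏_{i<j} δ(ξ_i,ξ_j)^{s_{ij}} dν^N`. -/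
def ZP1s (ν : Measure (P1 p)) [SigmaFinite ν] (N : ℕ) (s : Fin N → Fin N → ℂ) : ℂ :=
  ∫ x : Fin N → P1 p, ∏ q ∈ pairs N, ((pdelta p (x q.1) (x q.2) : ℝ) : ℂ) ^ s q.1 q.2
    ∂(Measure.pi fun _ => ν)

/-- The one-component canonical partition function `Z_N(ℙ¹(ℚ_p), β)`. -/
def ZP1 (ν : Measure (P1 p)) [SigmaFinite ν] (N : ℕ) (β : ℂ) : ℂ :=
  ∫ x : Fin N → P1 p, ∏ q ∈ pairs N, ((pdelta p (x q.1) (x q.2) : ℝ) : ℂ) ^ β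
    ∂(Measure.pi fun _ => ν)

/-! ### The quadratic recurrence -/

/-- The factor `ρ_{N,k}(t,β)` appearing in the quadratic recurrence; here
`N.choose 2 = N(N-1)/2`. -/
def rho (N k : ℕ) (t : ℝ) (β : ℂ) : ℂ :=
  if t = 0 then
    (((N : ℂ) + (N.choose 2 : ℂ) * β) * (1 - 2 * (k : ℂ) / (N : ℂ)) + 1) /
      (((N : ℂ) + (N.choose 2 : ℂ) * β) - 1)
  else
    Complex.sinh (((t : ℂ) / 2) * (((N : ℂ) + (N.choose 2 : ℂ) * β) * (1 - 2 * (k : ℂ) / (N : ℂ)) + 1)) /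
      Complex.sinh (((t : ℂ) / 2) * (((N : ℂ) + (N.choose 2 : ℂ) * β) - 1))

/-- The quadratic recurrence: `F 0 = F 1 = 1` and
`F N t β = ∑_{k=1}^{N-1} (k/N) ρ_{N,k}(t,β) F_{N-k}(t,β) F_k(t,β)` for `N ≥ 2`. -/
def F : ℕ → ℝ → ℂ → ℂ
  | 0, _, _ => 1
  | 1, _, _ => 1
  | N + 2, t, β =>
    ∑ k ∈ (Finset.Icc 1 (N + 1)).attach,
      (((k : ℕ) : ℂ) / ((N : ℂ) + 2)) * rho (N + 2) k t β *
        F (N + 2 - (k : ℕ)) t β * F (k : ℕ) t β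
  decreasing_by
  all_goals
    have hk := Finset.mem_Icc.mp k.2
    omega

/-! ### Splitting chains -/

/-- A splitting chain `Λ_0 > Λ_1 > ⋯ > Λ_L` of set partitions of the subset `I ⊆ [N]`,
beginning with the trivial partition `{I}` and ending with the partition of `I` into
singletons.  (The values `Λ ℓ` for `ℓ > L` are required to be `∅`, so that a chain is
determined by the genuine data `Λ_0, …, Λ_L`.) -/
structure SplChain (N : ℕ) (I : Finset (Fin N)) where
  L : ℕ
  Λ : ℕ → Finset (Finset (Fin N))
  nonempty_mem : ∀ ℓ ≤ L, ∀ B ∈ Λ ℓ, B.Nonempty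
  subset_mem : ∀ ℓ ≤ L, ∀ B ∈ Λ ℓ, B ⊆ I
  cover : ∀ ℓ ≤ L, ∀ i ∈ I, ∃! B, B ∈ Λ ℓ ∧ i ∈ B
  first : Λ 0 = {I}
  last : Λ L = I.image fun i => {i}
  refines : ∀ ℓ < L, ∀ B ∈ Λ (ℓ + 1), ∃ C ∈ Λ ℓ, B ⊆ C
  strict : ∀ ℓ < L, Λ (ℓ + 1) ≠ Λ ℓ
  trailing : ∀ ℓ, L < ℓ → Λ ℓ = ∅

variable {N : ℕ} {I : Finset (Fin N)}

/-- The branches of a splitting chain: the non-singleton parts,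
`ℬ(𝔖) = (Λ_0 ∪ ⋯ ∪ Λ_{L-1}) \ Λ_L`. -/
def SplChain.branches (S : SplChain N I) : Finset (Finset (Fin N)) :=
  ((Finset.range S.L).biUnion S.Λ) \ S.Λ S.L

/-- The depth `ℓ_𝔖(λ) = max {ℓ : λ ∈ Λ_ℓ}` of a branch. -/
def SplChain.depth (S : SplChain N I) (lam : Finset (Fin N)) : ℕ :=
  ((Finset.range (S.L + 1)).filter fun ℓ => lam ∈ S.Λ ℓ).sup id

/-- The degree `deg_𝔖(λ) = #{λ' ∈ Λ_{ℓ_𝔖(λ)+1} : λ' ⊆ λ}` of a branch. -/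
def SplChain.degree (S : SplChain N I) (lam : Finset (Fin N)) : ℕ :=
  ((S.Λ (S.depth lam + 1)).filter fun lam' => lam' ⊆ lam).card

/-- A splitting chain is reduced if every branch appears in exactly one partition of the
chain (namely the one at its depth). -/
def SplChain.Reduced (S : SplChain N I) : Prop :=
  ∀ lam ∈ S.branches, ∀ ℓ ≤ S.L, (lam ∈ S.Λ ℓ ↔ ℓ = S.depth lam)

/-- `e_λ(s) = #λ - 1 + ∑_{i<j, i,j ∈ λ} s_{ij}`. -/
def eexp (lam : Finset (Fin N)) (s : Fin N → Fin N → ℂ) : ℂ :=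
  (lam.card : ℂ) - 1 + ∑ q ∈ (pairs N).filter fun q => q.1 ∈ lam ∧ q.2 ∈ lam, s q.1 q.2

/-- Membership in `Ω_I`: `Re e_λ(s) > 0` for every `λ ⊆ I` with `#λ > 1`. -/
def InOmega (I : Finset (Fin N)) (s : Fin N → Fin N → ℂ) : Prop :=
  ∀ lam ⊆ I, 1 < lam.card → 0 < (eexp lam s).re


/-- The multivariate canonical partition function `𝒵_N(ℤ_p, s)` over `Fin N`-indexed tuples. -/
def ZNs (μ : Measure ℚ_[p]) [SigmaFinite μ] (X : Set ℚ_[p]) (N : ℕ)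
    (s : Fin N → Fin N → ℂ) : ℂ :=
  ∫ x : Fin N → ℚ_[p], ∏ q ∈ pairs N, (‖x q.1 - x q.2‖ : ℂ) ^ s q.1 q.2
    ∂(Measure.pi fun _ => μ.restrict X)

/-- The ball `p^v ℤ_p = {x : |x| ≤ p^{-v}}` in `ℚ_p`. -/
def pvball (v : ℤ) : Set ℚ_[p] := {x | ‖x‖ ≤ (p : ℝ) ^ (-v)}

/-- `G_N(q,β) = N! q^{(1/2)(N choose 2)β} F_N(log q, β)`. -/
def GN (N : ℕ) (β : ℂ) (q : ℝ) : ℂ :=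
  (N.factorial : ℂ) * (q : ℂ) ^ ((N.choose 2 : ℂ) * β / 2) * F N (Real.log q) β

/-- `H_N(q,β)`, the efficient formula for `Z_N(ℙ¹(K),β)` as a function of `q`. -/
def HN (N : ℕ) (β : ℂ) (q : ℝ) : ℂ :=
  (N.factorial : ℂ) * ∑ k ∈ Finset.range (N + 1),
    Complex.cosh (((Real.log q : ℂ) / 2) * ((N : ℂ) + (N.choose 2 : ℂ) * β) *
          (1 - 2 * (k : ℂ) / (N : ℂ))) /
        (2 * Complex.cosh ((Real.log q : ℂ) / 2)) ^ N *
      F (N - k) (Real.log q) β * F k (Real.log q) β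

end


lemma h_exists (p : ℕ) [Fact p.Prime] (x : ℚ_[p]) (hx : ‖x‖ ≤ 1) :
    ∃ a : Fin p, ‖x - (a : ℕ)‖ < 1 := by
  obtain ⟨z, rfl⟩ : ∃ z : ℤ_[p], (z : ℚ_[p]) = x := ⟨⟨x, hx⟩, rfl⟩
  have h := PadicInt.norm_sub_zmodRepr_lt_one (p := p) z
  have h2 := PadicInt.zmodRepr_lt_p (p := p) z
  refine ⟨⟨_, h2⟩, ?_⟩
  rw [PadicInt.norm_def, PadicInt.coe_sub, PadicInt.coe_natCast] at h
  exact h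

lemma h_natsub (p : ℕ) [Fact p.Prime] (a b : Fin p) (h : a ≠ b) :
    ‖((a : ℕ) : ℚ_[p]) - (b : ℕ)‖ = 1 := by
  have hle : ‖(((((a : ℕ) : ℤ) - ((b : ℕ) : ℤ)) : ℤ) : ℚ_[p])‖ ≤ 1 := Padic.norm_int_le_one _
  have hlt : ¬ ‖(((((a : ℕ) : ℤ) - ((b : ℕ) : ℤ)) : ℤ) : ℚ_[p])‖ < 1 := by
    rw [Padic.norm_intCast_lt_one_iff]
    intro hd
    apply h
    have ha := a.2
    have hb := b.2
    have : (((a : ℕ) : ℤ) - ((b : ℕ) : ℤ)) = 0 :=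
      Int.eq_zero_of_abs_lt_dvd hd (by rw [abs_lt]; omega)
    apply Fin.ext; omega
  have := le_antisymm hle (not_lt.mp hlt)
  push_cast at this
  exact this

lemma h_lt_iff (p : ℕ) [Fact p.Prime] (y : ℚ_[p]) : ‖(p : ℚ_[p]) * y‖ < 1 ↔ ‖y‖ ≤ 1 := by
  have h1 := Padic.norm_le_pow_iff_norm_lt_pow_add_one y 0
  have hp : (0:ℝ) < p := by exact_mod_cast (Fact.out : p.Prime).pos
  rw [norm_mul, Padic.norm_p]
  simp only [zpow_zero, zero_add, zpow_one] at h1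
  rw [h1, inv_mul_lt_iff₀ hp, mul_one]

/-- the affine map -/
noncomputable def phi1 (p : ℕ) [Fact p.Prime] (a : Fin p) (y : ℚ_[p]) : ℚ_[p] :=
  ((a : ℕ) : ℚ_[p]) + (p : ℚ_[p]) * y

lemma phi1_cont (p : ℕ) [Fact p.Prime] (a : Fin p) : Continuous (phi1 p a) := by
  unfold phi1; fun_prop

lemma zball_meas (p : ℕ) [Fact p.Prime] : MeasurableSet (Zball p) := by
  have : Zball p = (fun x => ‖x‖) ⁻¹' (Set.Iic 1) := rfl
  rw [this]
  exact (measurable_norm) measurableSet_Iic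

lemma decomp1 (p : ℕ) [Fact p.Prime]
    (μ : Measure ℚ_[p]) [SigmaFinite μ] [μ.IsAddHaarMeasure] (hμ : μ (Zball p) = 1)
    (B : Set ℚ_[p]) (hB : MeasurableSet B) :
    (μ.restrict (Zball p)) B =
      (p : ENNReal)⁻¹ * ∑ a : Fin p, (μ.restrict (Zball p)) (phi1 p a ⁻¹' B) := by
  have hp0 : (p : ℚ_[p]) ≠ 0 := by exact_mod_cast (Fact.out : p.Prime).ne_zero
  let e : ℚ_[p] ≃L[ℚ_[p]] ℚ_[p] := ContinuousLinearEquiv.unitsEquivAut ℚ_[p] (Units.mk0 _ hp0)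
  have he : ∀ y, e y = p * y := by intro y; simp [e, mul_comm]
  have hh : (μ.map e).IsAddHaarMeasure := e.isAddHaarMeasure_map μ
  obtain ⟨c, hc⟩ : ∃ c : NNReal, μ.map e = c • μ :=
    ⟨_, Measure.isAddLeftInvariant_eq_smul (μ.map e) μ⟩
  let R : Fin p → Set ℚ_[p] := fun a => {x | ‖x - (a : ℕ)‖ < 1}
  have hR : ∀ a, MeasurableSet (R a) := fun a =>
    (measurable_norm.comp (measurable_id.sub_const _)) measurableSet_Iio
  have key : ∀ B : Set ℚ_[p], MeasurableSet B → ∀ a : Fin p,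
      (μ.restrict (Zball p)) (phi1 p a ⁻¹' B) = c * μ (B ∩ R a) := by
    intro B hB a
    rw [Measure.restrict_apply ((phi1_cont p a).measurable hB)]
    have h1 : phi1 p a ⁻¹' B ∩ Zball p = e ⁻¹' ((fun z => ((a : ℕ) : ℚ_[p]) + z) ⁻¹' (B ∩ R a)) := by
      ext y
      simp only [Set.mem_inter_iff, Set.mem_preimage, phi1, Zball, R, Set.mem_ofPred_eq, he]
      rw [add_sub_cancel_left, h_lt_iff]
    rw [h1, ← Measure.map_apply e.continuous.measurable, hc, Measure.smul_apply,
      measure_preimage_add]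
    · rfl
    · exact (measurable_const_add _) (hB.inter (hR a))
  have hdisj : ∀ B : Set ℚ_[p], MeasurableSet B →
      ∑ a : Fin p, μ (B ∩ R a) = (μ.restrict (Zball p)) B := by
    intro B hB
    rw [Measure.restrict_apply hB, ← tsum_fintype (L := SummationFilter.unconditional _),
      ← measure_iUnion]
    · congr 1
      rw [← Set.inter_iUnion]
      congr 1
      ext x
      simp only [Set.mem_iUnion, R, Zball, Set.mem_ofPred_eq]
      constructor
      · rintro ⟨a, ha⟩
        have : x = (x - (a : ℕ)) + (a : ℕ) := by ring
        rw [this]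
        refine (Padic.nonarchimedean _ _).trans (max_le ha.le ?_)
        exact_mod_cast Padic.norm_int_le_one (p := p) ((a : ℕ) : ℤ)
      · exact h_exists p x
    · intro a b hab
      rw [Function.onFun, Set.disjoint_left]
      rintro x ⟨_, ha⟩ ⟨_, hb⟩
      have := h_natsub p a b hab
      have h2 : ((a : ℕ) : ℚ_[p]) - (b : ℕ) = (x - (b : ℕ)) + (- (x - (a : ℕ))) := by ring
      rw [h2] at this
      have h3 := Padic.nonarchimedean (x - ((b : ℕ) : ℚ_[p])) (- (x - ((a : ℕ) : ℚ_[p])))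
      rw [norm_neg, this] at h3
      exact absurd h3 (not_le.mpr (max_lt hb ha))
    · exact fun a => hB.inter (hR a)
  have hcp : (c : ENNReal) = p := by
    have h1 := hdisj Set.univ MeasurableSet.univ
    have h2 : ∀ a : Fin p, (μ.restrict (Zball p)) (phi1 p a ⁻¹' Set.univ) = 1 := by
      intro a; rw [Set.preimage_univ, Measure.restrict_apply_univ, hμ]
    have h3 : ∑ a : Fin p, (μ.restrict (Zball p)) (phi1 p a ⁻¹' Set.univ) = p := by
      simp [hμ]
    rw [Finset.sum_congr rfl (fun a _ => key Set.univ MeasurableSet.univ a), ← Finset.mul_sum, h1,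
      Measure.restrict_apply_univ, hμ, mul_one] at h3
    exact h3
  rw [Finset.sum_congr rfl (fun a _ => key B hB a), ← Finset.mul_sum, hdisj B hB, hcp, ← mul_assoc,
    ENNReal.inv_mul_cancel, one_mul]
  · exact_mod_cast (Fact.out : p.Prime).ne_zero
  · exact ENNReal.natCast_ne_top p

/-- the affine map, on tuples -/
noncomputable def phiN (p : ℕ) [Fact p.Prime] {N : ℕ} (a : Fin N → Fin p) (y : Fin N → ℚ_[p]) :
    Fin N → ℚ_[p] := fun i => phi1 p (a i) (y i)

lemma phiN_meas (p : ℕ) [Fact p.Prime] {N : ℕ} (a : Fin N → Fin p) : Measurable (phiN p a) := by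
  unfold phiN
  exact measurable_pi_lambda _ fun i => (phi1_cont p (a i)).measurable.comp (measurable_pi_apply i)

/-- the probability measure -/
noncomputable abbrev PP (p : ℕ) [Fact p.Prime] (μ : Measure ℚ_[p]) (N : ℕ) [SigmaFinite μ] :
    Measure (Fin N → ℚ_[p]) := Measure.pi fun _ => μ.restrict (Zball p)

lemma decompN (p : ℕ) [Fact p.Prime] (N : ℕ)
    (μ : Measure ℚ_[p]) [SigmaFinite μ] [μ.IsAddHaarMeasure] (hμ : μ (Zball p) = 1) :
    PP p μ N = ((p : ENNReal) ^ N)⁻¹ • ∑ a : Fin N → Fin p, (PP p μ N).map (phiN p a) := by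
  apply Measure.pi_eq
  intro B hB
  have : ∀ i, (μ.restrict (Zball p)) (B i) = _ := fun i => decomp1 p μ hμ (B i) (hB i)
  rw [Finset.prod_congr rfl (fun i _ => this i), Finset.prod_mul_distrib, Finset.prod_univ_sum]
  simp only [Measure.smul_apply, Measure.finsetSum_apply, smul_eq_mul, Finset.prod_const,
    Finset.card_univ, Fintype.card_fin, Fintype.piFinset_univ]
  rw [ENNReal.inv_pow]
  congr 1
  apply Finset.sum_congr rfl
  intro a _
  rw [Measure.map_apply (phiN_meas p a) (MeasurableSet.univ_pi hB)]
  have : phiN p a ⁻¹' Set.univ.pi B = Set.univ.pi fun i => phi1 p (a i) ⁻¹' B i := by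
    ext y; simp [phiN]
  rw [this, Measure.pi_pi]

lemma cov_lint (p : ℕ) [Fact p.Prime] (N : ℕ)
    (μ : Measure ℚ_[p]) [SigmaFinite μ] [μ.IsAddHaarMeasure] (hμ : μ (Zball p) = 1)
    (f : (Fin N → ℚ_[p]) → ENNReal) (hf : Measurable f) :
    ∫⁻ x, f x ∂(PP p μ N) =
      ((p : ENNReal) ^ N)⁻¹ * ∑ a : Fin N → Fin p, ∫⁻ y, f (phiN p a y) ∂(PP p μ N) := by
  conv_lhs => rw [decompN p N μ hμ]
  rw [lintegral_smul_measure, lintegral_finsetSum_measure, smul_eq_mul]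
  congr 1
  exact Finset.sum_congr rfl fun a _ => lintegral_map hf (phiN_meas p a)

lemma cov_int (p : ℕ) [Fact p.Prime] (N : ℕ)
    (μ : Measure ℚ_[p]) [SigmaFinite μ] [μ.IsAddHaarMeasure] (hμ : μ (Zball p) = 1)
    (f : (Fin N → ℚ_[p]) → ℂ) (hf : Measurable f) (hi : Integrable f (PP p μ N)) :
    ∫ x, f x ∂(PP p μ N) =
      ((p : ℂ) ^ N)⁻¹ * ∑ a : Fin N → Fin p, ∫ y, f (phiN p a y) ∂(PP p μ N) := by
  have hp : ((p : ENNReal) ^ N)⁻¹ ≠ 0 :=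
    ENNReal.inv_ne_zero.mpr (ENNReal.pow_ne_top (ENNReal.natCast_ne_top p))
  have hp' : ((p : ENNReal) ^ N)⁻¹ ≠ ⊤ := by
    apply ENNReal.inv_ne_top.mpr
    exact pow_ne_zero _ (by exact_mod_cast (Fact.out : p.Prime).ne_zero)
  rw [decompN p N μ hμ, integrable_smul_measure hp hp', integrable_finsetSum_measure] at hi
  conv_lhs => rw [decompN p N μ hμ]
  rw [integral_smul_measure, integral_finsetSum_measure hi]
  simp only [ENNReal.toReal_inv, ENNReal.toReal_pow, ENNReal.toReal_natCast]
  rw [Complex.real_smul]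
  push_cast
  congr 1
  exact Finset.sum_congr rfl fun a _ => integral_map (phiN_meas p a).aemeasurable
    hf.aestronglyMeasurable

lemma diag_null (p : ℕ) [Fact p.Prime] (N : ℕ)
    (μ : Measure ℚ_[p]) [SigmaFinite μ] [μ.IsAddHaarMeasure] (hμ : μ (Zball p) = 1)
    (i j : Fin N) (hij : i ≠ j) : (PP p μ N) {x | x i = x j} = 0 := by
  have : IsProbabilityMeasure (μ.restrict (Zball p)) := ⟨by simp [hμ]⟩
  have hE : MeasurableSet {x : Fin N → ℚ_[p] | x i = x j} :=
    measurableSet_eq_fun (measurable_pi_apply i) (measurable_pi_apply j)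
  have hnp : (0 : ENNReal) < p := by exact_mod_cast (Fact.out : p.Prime).pos
  have hpp : ((p : ENNReal) ^ N)⁻¹ ≠ ⊤ := by
    apply ENNReal.inv_ne_top.mpr
    exact pow_ne_zero _ hnp.ne'
  have h1 : (PP p μ N) {x | x i = x j} ≤ ((p : ENNReal) ^ N)⁻¹ *
      ∑ a : Fin N → Fin p, if a i = a j then (PP p μ N) {x | x i = x j} else 0 := by
    conv_lhs => rw [decompN p N μ hμ]
    rw [Measure.smul_apply, Measure.finsetSum_apply, smul_eq_mul]
    gcongr with a
    rw [Measure.map_apply (phiN_meas p a) hE]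
    split_ifs with h
    · apply measure_mono
      intro y hy
      have hp0 : (p : ℚ_[p]) ≠ 0 := by exact_mod_cast (Fact.out : p.Prime).ne_zero
      simpa [phiN, phi1, h, hp0] using hy
    · rw [nonpos_iff_eq_zero, measure_eq_zero_iff_ae_notMem]
      have hz : ∀ k : Fin N, ∀ᵐ y ∂(PP p μ N), y k ∈ Zball p := by
        intro k
        have := (Measure.quasiMeasurePreserving_eval (fun _ : Fin N => μ.restrict (Zball p)) k).ae
          (ae_restrict_mem (zball_meas p))
        exact this
      filter_upwards [hz i, hz j] with y hi hj hc
      simp only [Set.mem_preimage, Set.mem_ofPred_eq, phiN, phi1] at hc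
      have h3 := h_natsub p _ _ h
      have h4 : (((a i : ℕ)) : ℚ_[p]) - (a j : ℕ) = p * (y j + - y i) := by linear_combination hc
      rw [h4] at h3
      have h5 : ‖(p : ℚ_[p]) * (y j + - y i)‖ < 1 := by
        rw [h_lt_iff]
        refine (Padic.nonarchimedean _ _).trans (max_le hj ?_)
        rw [norm_neg]; exact hi
      exact absurd h3 h5.ne
  set d := (PP p μ N) {x | x i = x j} with hd
  have hdt : d ≠ ⊤ := measure_ne_top _ _
  by_contra hd0
  have hlt : ((p : ENNReal) ^ N)⁻¹ * (∑ a : Fin N → Fin p, if a i = a j then d else 0) <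
      ((p : ENNReal) ^ N)⁻¹ * (∑ a : Fin N → Fin p, d) := by
    apply ENNReal.mul_lt_mul_right
    · exact ENNReal.inv_ne_zero.mpr (ENNReal.pow_ne_top (ENNReal.natCast_ne_top p))
    · exact hpp
    let z : Fin p := ⟨0, (Fact.out : p.Prime).pos⟩
    let o : Fin p := ⟨1, (Fact.out : p.Prime).one_lt⟩
    let a0 : Fin N → Fin p := fun k => if k = i then o else z
    have ha0 : a0 i ≠ a0 j := by simp [a0, hij.symm, o, z]
    rw [← Finset.add_sum_erase _ _ (Finset.mem_univ a0),
      ← Finset.add_sum_erase Finset.univ (fun _ => d) (Finset.mem_univ a0)]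
    rw [if_neg ha0]
    refine ENNReal.add_lt_add_of_lt_of_le ?_ (pos_iff_ne_zero.mpr hd0) ?_
    · apply ne_of_lt
      rw [ENNReal.sum_lt_top]
      intro a _
      split_ifs
      · exact hdt.lt_top
      · simp
    · apply Finset.sum_le_sum
      intro a _
      split_ifs <;> simp
  have h6 := h1.trans_lt hlt
  rw [Finset.sum_const, Finset.card_univ, nsmul_eq_mul, Fintype.card_pi] at h6
  simp only [Fintype.card_fin, Finset.prod_const, Finset.card_univ] at h6
  rw [Nat.cast_pow, ← mul_assoc, ENNReal.inv_mul_cancel, one_mul] at h6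
  · exact lt_irrefl _ h6
  · exact pow_ne_zero _ hnp.ne'
  · exact ENNReal.pow_ne_top (ENNReal.natCast_ne_top p)


/-- pairs inside I -/
def pI {N : ℕ} (I : Finset (Fin N)) : Finset (Fin N × Fin N) :=
  (pairs N).filter fun q => q.1 ∈ I ∧ q.2 ∈ I

/-- the integrand for I -/
noncomputable def gI (p : ℕ) [Fact p.Prime] {N : ℕ} (s : Fin N → Fin N → ℂ) (I : Finset (Fin N))
    (x : Fin N → ℚ_[p]) : ℂ := ∏ q ∈ pI I, (‖x q.1 - x q.2‖ : ℂ) ^ s q.1 q.2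

/-- sum of exponents -/
noncomputable def sg {N : ℕ} (s : Fin N → Fin N → ℂ) (I : Finset (Fin N)) : ℂ :=
  ∑ q ∈ pI I, s q.1 q.2

/-- fibre -/
def fib {p N : ℕ} (I : Finset (Fin N)) (a : Fin N → Fin p) (c : Fin p) : Finset (Fin N) :=
  I.filter fun i => a i = c

lemma gI_meas (p : ℕ) [Fact p.Prime] {N : ℕ} (s : Fin N → Fin N → ℂ) (I : Finset (Fin N)) :
    Measurable (gI p s I) := by
  unfold gI
  apply Finset.measurable_fun_prod
  intro q _
  apply Measurable.pow_const
  apply Complex.measurable_ofReal.comp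
  have h1 : Measurable fun x : Fin N → ℚ_[p] => x q.1 := measurable_pi_apply _
  have h2 : Measurable fun x : Fin N → ℚ_[p] => x q.2 := measurable_pi_apply _
  exact measurable_norm.comp (h1.sub h2)

lemma gI_dep (p : ℕ) [Fact p.Prime] {N : ℕ} (s : Fin N → Fin N → ℂ) (I : Finset (Fin N))
    (x y : Fin N → ℚ_[p]) (h : ∀ i ∈ I, x i = y i) : gI p s I x = gI p s I y := by
  unfold gI
  apply Finset.prod_congr rfl
  intro q hq
  simp only [pI, Finset.mem_filter] at hq
  rw [h _ hq.2.1, h _ hq.2.2]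

lemma norm_phi (p : ℕ) [Fact p.Prime] (a b : Fin p) (x y : ℚ_[p]) (hx : ‖x‖ ≤ 1) (hy : ‖y‖ ≤ 1) :
    ‖phi1 p a x - phi1 p b y‖ = if a = b then (p : ℝ)⁻¹ * ‖x - y‖ else 1 := by
  unfold phi1
  split_ifs with h
  · subst h
    have : ((a : ℕ) : ℚ_[p]) + p * x - ((a : ℕ) + p * y) = p * (x - y) := by ring
    rw [this, norm_mul, Padic.norm_p]
  · have h1 := h_natsub p a b h
    have h2 : ‖(p : ℚ_[p]) * (x + - y)‖ < 1 := by
      rw [h_lt_iff]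
      refine (Padic.nonarchimedean _ _).trans (max_le hx ?_)
      rw [norm_neg]; exact hy
    have : ((a : ℕ) : ℚ_[p]) + p * x - ((b : ℕ) + p * y) =
      (((a : ℕ) : ℚ_[p]) - (b : ℕ)) + p * (x + - y) := by ring
    rw [this, Padic.add_eq_max_of_ne (by rw [h1]; exact h2.ne'), h1, max_eq_left h2.le]

lemma cpow_fsum {ι : Type*} (z : ℂ) (hz : z ≠ 0) (S : Finset ι) (f : ι → ℂ) :
    z ^ (∑ i ∈ S, f i) = ∏ i ∈ S, z ^ f i := by
  classical
  induction S using Finset.induction_on with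
  | empty => simp
  | insert i S hi ih => rw [Finset.sum_insert hi, Finset.prod_insert hi, Complex.cpow_add _ _ hz, ih]

lemma gI_phi (p : ℕ) [Fact p.Prime] {N : ℕ} (s : Fin N → Fin N → ℂ) (I : Finset (Fin N))
    (a : Fin N → Fin p) (y : Fin N → ℚ_[p]) (hy : ∀ i, y i ∈ Zball p) :
    gI p s I (phiN p a y) =
      ∏ c : Fin p, ((p : ℂ) ^ (- sg s (fib I a c)) * gI p s (fib I a c) y) := by
  have hp0 : (p : ℂ) ≠ 0 := by exact_mod_cast (Fact.out : p.Prime).ne_zero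
  have h1 : ∀ c : Fin p, ((p : ℂ) ^ (- sg s (fib I a c)) * gI p s (fib I a c) y) =
      ∏ q ∈ ((pI I).filter fun q => a q.1 = a q.2) with a q.1 = c,
        ((p : ℂ) ^ (- s q.1 q.2) * (‖y q.1 - y q.2‖ : ℂ) ^ s q.1 q.2) := by
    intro c
    unfold sg gI
    rw [← Finset.sum_neg_distrib, cpow_fsum _ hp0, ← Finset.prod_mul_distrib]
    apply Finset.prod_congr _ (fun _ _ => rfl)
    ext q
    simp only [pI, fib, Finset.mem_filter]
    constructor
    · rintro ⟨h1, ⟨h2, h3⟩, h4, h5⟩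
      exact ⟨⟨⟨h1, h2, h4⟩, h3.trans h5.symm⟩, h3⟩
    · rintro ⟨⟨⟨h1, h2, h4⟩, h3⟩, h5⟩
      exact ⟨h1, ⟨h2, h5⟩, h4, h3 ▸ h5⟩
  rw [Finset.prod_congr rfl (fun c _ => h1 c), Finset.prod_fiberwise, Finset.prod_filter]
  unfold gI
  apply Finset.prod_congr rfl
  intro q _
  have := norm_phi p (a q.1) (a q.2) (y q.1) (y q.2) (hy _) (hy _)
  unfold phiN
  rw [this]
  split_ifs with h
  · rw [Complex.ofReal_mul, Complex.mul_cpow_ofReal_nonneg (by positivity) (by positivity)]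
    congr 1
    push_cast
    rw [Complex.inv_cpow _ _ (by rw [Complex.natCast_arg]; exact Real.pi_pos.ne), Complex.cpow_neg]
  · simp

lemma indep_of_dep (p : ℕ) [Fact p.Prime] {N : ℕ}
    (μ : Measure ℚ_[p]) [SigmaFinite μ] [IsProbabilityMeasure (μ.restrict (Zball p))]
    {E F : Type*} [MeasurableSpace E] [MeasurableSpace F]
    (f : (Fin N → ℚ_[p]) → E) (g : (Fin N → ℚ_[p]) → F) (hf : Measurable f) (hg : Measurable g)
    (S T : Finset (Fin N)) (hST : Disjoint S T)
    (hfS : ∀ x y : Fin N → ℚ_[p], (∀ i ∈ S, x i = y i) → f x = f y)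
    (hgT : ∀ x y : Fin N → ℚ_[p], (∀ i ∈ T, x i = y i) → g x = g y) :
    ProbabilityTheory.IndepFun f g (PP p μ N) := by
  have h0 : ProbabilityTheory.iIndepFun (fun (i : Fin N) (ω : Fin N → ℚ_[p]) => ω i) (PP p μ N) :=
    ProbabilityTheory.iIndepFun_pi (μ := fun _ : Fin N => μ.restrict (Zball p))
      (X := fun _ x => x) (fun i => aemeasurable_id)
  have h1 := h0.indepFun_finset S T hST (fun i => measurable_pi_apply i)
  let ext : ∀ S : Finset (Fin N), (S → ℚ_[p]) → (Fin N → ℚ_[p]) := fun S u i =>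
    if h : i ∈ S then u ⟨i, h⟩ else 0
  have hext : ∀ S, Measurable (ext S) := by
    intro S
    apply measurable_pi_lambda
    intro i
    simp only [ext]
    split_ifs with h
    · exact measurable_pi_apply _
    · exact measurable_const
  have h2 := h1.comp (hf.comp (hext S)) (hg.comp (hext T))
  convert h2 using 1
  · funext x
    apply hfS
    intro i hi
    simp [ext, hi]
  · funext x
    apply hgT
    intro i hi
    simp [ext, hi]

lemma ae_zball (p : ℕ) [Fact p.Prime] (N : ℕ) (μ : Measure ℚ_[p]) [SigmaFinite μ] :
    ∀ᵐ y ∂(PP p μ N), ∀ i, y i ∈ Zball p := by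
  rw [ae_all_iff]
  intro k
  exact (Measure.quasiMeasurePreserving_eval (fun _ : Fin N => μ.restrict (Zball p)) k).ae
          (ae_restrict_mem (zball_meas p))

lemma fib_disj {p N : ℕ} (I : Finset (Fin N)) (a : Fin N → Fin p) (C : Finset (Fin p)) (c : Fin p)
    (hc : c ∉ C) : Disjoint (fib I a c) (C.biUnion (fib I a)) := by
  rw [Finset.disjoint_left]
  intro i hi hi2
  simp only [fib, Finset.mem_filter, Finset.mem_biUnion] at hi hi2
  obtain ⟨d, hd, h⟩ := hi2
  rw [← hi.2, h.2] at hc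
  exact hc hd

lemma lint_prod (p : ℕ) [Fact p.Prime] {N : ℕ} (s : Fin N → Fin N → ℂ)
    (μ : Measure ℚ_[p]) [SigmaFinite μ] [IsProbabilityMeasure (μ.restrict (Zball p))]
    (I : Finset (Fin N)) (a : Fin N → Fin p) (C : Finset (Fin p)) :
    ∫⁻ y, ∏ c ∈ C, ‖gI p s (fib I a c) y‖ₑ ∂(PP p μ N) =
      ∏ c ∈ C, ∫⁻ y, ‖gI p s (fib I a c) y‖ₑ ∂(PP p μ N) := by
  induction C using Finset.induction_on with
  | empty => simp
  | insert c C hc ih =>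
    simp only [Finset.prod_insert hc]
    rw [← ih]
    apply ProbabilityTheory.lintegral_mul_eq_lintegral_mul_lintegral_of_indepFun''
    · exact (gI_meas p s _).enorm.aemeasurable
    · exact (Finset.measurable_fun_prod _ fun c _ => (gI_meas p s _).enorm).aemeasurable
    · refine indep_of_dep p μ _ _ (gI_meas p s _).enorm
        (Finset.measurable_fun_prod _ fun c _ => (gI_meas p s _).enorm) _ _
        (fib_disj I a C c hc) ?_ ?_
      · intro x y h
        rw [gI_dep p s _ x y h]
      · intro x y h
        apply Finset.prod_congr rfl
        intro d hd
        rw [gI_dep p s _ x y (fun i hi => h i (Finset.mem_biUnion.mpr ⟨d, hd, hi⟩))]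

lemma int_prod (p : ℕ) [Fact p.Prime] {N : ℕ} (s : Fin N → Fin N → ℂ)
    (μ : Measure ℚ_[p]) [SigmaFinite μ] [IsProbabilityMeasure (μ.restrict (Zball p))]
    (I : Finset (Fin N)) (a : Fin N → Fin p) (C : Finset (Fin p)) :
    ∫ y, ∏ c ∈ C, gI p s (fib I a c) y ∂(PP p μ N) =
      ∏ c ∈ C, ∫ y, gI p s (fib I a c) y ∂(PP p μ N) := by
  induction C using Finset.induction_on with
  | empty => simp
  | insert c C hc ih =>
    simp only [Finset.prod_insert hc]
    rw [← ih]
    apply ProbabilityTheory.IndepFun.integral_fun_mul_eq_mul_integral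
    · refine indep_of_dep p μ _ _ (gI_meas p s _)
        (Finset.measurable_fun_prod _ fun c _ => (gI_meas p s _)) _ _
        (fib_disj I a C c hc) ?_ ?_
      · intro x y h
        rw [gI_dep p s _ x y h]
      · intro x y h
        apply Finset.prod_congr rfl
        intro d hd
        rw [gI_dep p s _ x y (fun i hi => h i (Finset.mem_biUnion.mpr ⟨d, hd, hi⟩))]
    · exact (gI_meas p s _).aestronglyMeasurable
    · exact (Finset.measurable_fun_prod _ fun c _ => (gI_meas p s _)).aestronglyMeasurable

/-- absolute moment -/
noncomputable def kW (p : ℕ) [Fact p.Prime] {N : ℕ} (μ : Measure ℚ_[p]) [SigmaFinite μ]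
    (s : Fin N → Fin N → ℂ) (I : Finset (Fin N)) : ENNReal :=
  ‖(p : ℂ) ^ (- sg s I)‖ₑ * ∫⁻ y, ‖gI p s I y‖ₑ ∂(PP p μ N)

/-- moment -/
noncomputable def zW (p : ℕ) [Fact p.Prime] {N : ℕ} (μ : Measure ℚ_[p]) [SigmaFinite μ]
    (s : Fin N → Fin N → ℂ) (I : Finset (Fin N)) : ℂ :=
  (p : ℂ) ^ (- sg s I) * ∫ y, gI p s I y ∂(PP p μ N)

lemma lint_phi (p : ℕ) [Fact p.Prime] {N : ℕ} (s : Fin N → Fin N → ℂ)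
    (μ : Measure ℚ_[p]) [SigmaFinite μ] [IsProbabilityMeasure (μ.restrict (Zball p))]
    (I : Finset (Fin N)) (a : Fin N → Fin p) :
    ∫⁻ y, ‖gI p s I (phiN p a y)‖ₑ ∂(PP p μ N) = ∏ c : Fin p, kW p μ s (fib I a c) := by
  unfold kW
  rw [Finset.prod_mul_distrib, ← lint_prod, ← lintegral_const_mul]
  · apply lintegral_congr_ae
    filter_upwards [ae_zball p N μ] with y hy
    rw [gI_phi p s I a y hy, Finset.prod_mul_distrib, enorm_mul]
    simp only [enorm_eq_nnnorm, nnnorm_prod, ENNReal.ofNNReal_finsetProd]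
  · exact Finset.measurable_fun_prod _ fun c _ => (gI_meas p s _).enorm

lemma int_phi (p : ℕ) [Fact p.Prime] {N : ℕ} (s : Fin N → Fin N → ℂ)
    (μ : Measure ℚ_[p]) [SigmaFinite μ] [IsProbabilityMeasure (μ.restrict (Zball p))]
    (I : Finset (Fin N)) (a : Fin N → Fin p) :
    ∫ y, gI p s I (phiN p a y) ∂(PP p μ N) = ∏ c : Fin p, zW p μ s (fib I a c) := by
  unfold zW
  rw [Finset.prod_mul_distrib, ← int_prod, ← integral_const_mul]
  apply integral_congr_ae
  filter_upwards [ae_zball p N μ] with y hy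
  rw [gI_phi p s I a y hy, Finset.prod_mul_distrib]

lemma gI_ne_zero (p : ℕ) [Fact p.Prime] {N : ℕ} (s : Fin N → Fin N → ℂ)
    (μ : Measure ℚ_[p]) [SigmaFinite μ] [μ.IsAddHaarMeasure] (hμ : μ (Zball p) = 1)
    (I : Finset (Fin N)) : ∀ᵐ x ∂(PP p μ N), gI p s I x ≠ 0 := by
  have h : ∀ᵐ x ∂(PP p μ N), ∀ q : Fin N × Fin N, q.1 ≠ q.2 → x q.1 ≠ x q.2 := by
    rw [ae_all_iff]
    intro q
    by_cases hq : q.1 = q.2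
    · simp [hq]
    · have := diag_null p N μ hμ q.1 q.2 hq
      rw [measure_eq_zero_iff_ae_notMem] at this
      filter_upwards [this] with x hx _
      exact hx
  filter_upwards [h] with x hx
  unfold gI
  rw [Finset.prod_ne_zero_iff]
  intro q hq hz
  rw [Complex.cpow_eq_zero_iff] at hz
  simp only [pI, pairs, Finset.mem_filter] at hq
  refine hx q hq.1.2.ne ?_
  have := hz.1
  rw [Complex.ofReal_eq_zero, norm_eq_zero, sub_eq_zero] at this
  exact this

lemma kI_pos (p : ℕ) [Fact p.Prime] {N : ℕ} (s : Fin N → Fin N → ℂ)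
    (μ : Measure ℚ_[p]) [SigmaFinite μ] [μ.IsAddHaarMeasure] (hμ : μ (Zball p) = 1)
    (I : Finset (Fin N)) : ∫⁻ y, ‖gI p s I y‖ₑ ∂(PP p μ N) ≠ 0 := by
  have : IsProbabilityMeasure (μ.restrict (Zball p)) := ⟨by simp [hμ]⟩
  intro h
  rw [lintegral_eq_zero_iff (gI_meas p s I).enorm] at h
  have h2 : ∀ᵐ x ∂(PP p μ N), False := by
    filter_upwards [h, gI_ne_zero p s μ hμ I] with x h1 h2
    simp at h1
    exact h2 h1
  simp at h2
  exact IsProbabilityMeasure.ne_zero _ h2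

lemma gI_one (p : ℕ) [Fact p.Prime] {N : ℕ} (s : Fin N → Fin N → ℂ) (I : Finset (Fin N))
    (hI : I.card ≤ 1) : pI I = ∅ ∧ sg s I = 0 ∧ ∀ x, gI p s I x = 1 := by
  have h : pI I = ∅ := by
    ext q
    simp only [pI, pairs, Finset.mem_filter, Finset.notMem_empty, iff_false]
    rintro ⟨⟨_, h1⟩, h2, h3⟩
    exact h1.ne (Finset.card_le_one.mp hI _ h2 _ h3)
  exact ⟨h, by simp [sg, h], fun x => by simp [gI, h]⟩

lemma kW_one (p : ℕ) [Fact p.Prime] {N : ℕ} (s : Fin N → Fin N → ℂ)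
    (μ : Measure ℚ_[p]) [SigmaFinite μ] [IsProbabilityMeasure (μ.restrict (Zball p))]
    (I : Finset (Fin N)) (hI : I.card ≤ 1) : kW p μ s I = 1 := by
  obtain ⟨_, h2, h3⟩ := gI_one p s I hI
  simp [kW, h2, h3]

lemma zW_one (p : ℕ) [Fact p.Prime] {N : ℕ} (s : Fin N → Fin N → ℂ)
    (μ : Measure ℚ_[p]) [SigmaFinite μ] [IsProbabilityMeasure (μ.restrict (Zball p))]
    (I : Finset (Fin N)) (hI : I.card ≤ 1) : zW p μ s I = 1 := by
  obtain ⟨_, h2, h3⟩ := gI_one p s I hI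
  simp [zW, h2, h3]


/-- set partitions -/
def IsPart {N : ℕ} (I : Finset (Fin N)) (P : Finset (Finset (Fin N))) : Prop :=
  (∀ B ∈ P, B.Nonempty) ∧ (∀ B ∈ P, B ⊆ I) ∧ ∀ i ∈ I, ∃! B, B ∈ P ∧ i ∈ B

open Classical in
/-- all set partitions -/
noncomputable def parts {N : ℕ} (I : Finset (Fin N)) : Finset (Finset (Finset (Fin N))) :=
  Finset.univ.filter (IsPart I)

lemma mem_parts {N : ℕ} (I : Finset (Fin N)) (P : Finset (Finset (Fin N))) :
    P ∈ parts I ↔ IsPart I P := by simp [parts]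

lemma IsPart.eq_of_mem {N : ℕ} {I : Finset (Fin N)} {P : Finset (Finset (Fin N))}
    (h : IsPart I P) {B C : Finset (Fin N)} (hB : B ∈ P) (hC : C ∈ P) {i : Fin N} (hi : i ∈ B)
    (hi' : i ∈ C) : B = C :=
  (h.2.2 i (h.2.1 B hB hi)).unique ⟨hB, hi⟩ ⟨hC, hi'⟩

/-- the partition induced by a colouring -/
def colP {p N : ℕ} (I : Finset (Fin N)) (a : Fin N → Fin p) : Finset (Finset (Fin N)) :=
  (Finset.univ.image (fib I a)).erase ∅

lemma mem_colP {p N : ℕ} (I : Finset (Fin N)) (a : Fin N → Fin p) (B : Finset (Fin N)) :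
    B ∈ colP I a ↔ B.Nonempty ∧ ∃ c, fib I a c = B := by
  simp [colP, Finset.nonempty_iff_ne_empty]

lemma mem_fib {p N : ℕ} (I : Finset (Fin N)) (a : Fin N → Fin p) (c : Fin p) (i : Fin N) :
    i ∈ fib I a c ↔ i ∈ I ∧ a i = c := by simp [fib]

lemma colP_isPart {p N : ℕ} (I : Finset (Fin N)) (a : Fin N → Fin p) : IsPart I (colP I a) := by
  refine ⟨fun B hB => ((mem_colP I a B).1 hB).1, ?_, ?_⟩
  · intro B hB i hi
    obtain ⟨_, c, rfl⟩ := (mem_colP I a B).1 hB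
    exact ((mem_fib I a c i).1 hi).1
  · intro i hi
    refine ⟨fib I a (a i), ⟨(mem_colP _ _ _).2 ⟨⟨i, ?_⟩, _, rfl⟩, ?_⟩, ?_⟩
    · exact (mem_fib _ _ _ _).2 ⟨hi, rfl⟩
    · exact (mem_fib _ _ _ _).2 ⟨hi, rfl⟩
    · rintro B ⟨hB, hiB⟩
      obtain ⟨_, c, rfl⟩ := (mem_colP I a B).1 hB
      rw [((mem_fib _ _ _ _).1 hiB).2]

lemma prod_colP {p N : ℕ} {R : Type*} [CommSemiring R] (W : Finset (Fin N) → R) (hW : W ∅ = 1)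
    (I : Finset (Fin N)) (a : Fin N → Fin p) :
    ∏ c : Fin p, W (fib I a c) = ∏ B ∈ colP I a, W B := by
  classical
  have h1 : ∏ c : Fin p, W (fib I a c) =
      ∏ c ∈ Finset.univ.filter (fun c => fib I a c ≠ ∅), W (fib I a c) := by
    symm
    apply Finset.prod_filter_of_ne
    intro c _ h h2
    exact h (by rw [h2, hW])
  have h2 : colP I a = (Finset.univ.filter (fun c => fib I a c ≠ ∅)).image (fib I a) := by
    ext B
    simp only [colP, Finset.mem_erase, Finset.mem_image, Finset.mem_univ, true_and,
      Finset.mem_filter]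
    constructor
    · rintro ⟨h, c, rfl⟩; exact ⟨c, h, rfl⟩
    · rintro ⟨c, h, rfl⟩; exact ⟨h, c, rfl⟩
  rw [h1, h2, Finset.prod_image]
  intro c hc d hd h
  simp only [Finset.coe_filter, Finset.mem_univ, true_and, Set.mem_ofPred_eq] at hc
  obtain ⟨i, hi⟩ := Finset.nonempty_iff_ne_empty.2 hc
  have hi' : i ∈ fib I a d := by
    have h' : fib I a c = fib I a d := h
    rwa [← h']
  exact ((mem_fib _ _ _ _).1 hi).2.symm.trans ((mem_fib _ _ _ _).1 hi').2

lemma card_colP {p N : ℕ} (I : Finset (Fin N)) (P : Finset (Finset (Fin N))) (hP : IsPart I P) :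
    (Finset.univ.filter fun a : Fin N → Fin p => colP I a = P).card =
      p ^ (N - I.card) * p.descFactorial P.card := by
  classical
  have hb : ∀ i : I, ∃ B : P, i.1 ∈ B.1 := by
    intro i
    obtain ⟨B, hB, _⟩ := hP.2.2 i.1 i.2
    exact ⟨⟨B, hB.1⟩, hB.2⟩
  choose blk hblk using hb
  have hblk' : ∀ (B : P) (i : Fin N) (hi : i ∈ B.1) (hI : i ∈ I), blk ⟨i, hI⟩ = B := by
    intro B i hi hI
    apply Subtype.ext
    exact hP.eq_of_mem (blk ⟨i, hI⟩).2 B.2 (hblk ⟨i, hI⟩) hi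
  let Psi : (P ↪ Fin p) × ({i // i ∉ I} → Fin p) → (Fin N → Fin p) := fun eb i =>
    if h : i ∈ I then eb.1 (blk ⟨i, h⟩) else eb.2 ⟨i, h⟩
  have hPsi : ∀ eb (B : P) i, i ∈ B.1 → Psi eb i = eb.1 B := by
    intro eb B i hi
    have hI := hP.2.1 B.1 B.2 hi
    simp only [Psi, hI, dif_pos]
    rw [hblk' B i hi hI]
  have hinj : Function.Injective Psi := by
    rintro ⟨e, b⟩ ⟨e', b'⟩ h
    have h1 : e = e' := by
      ext B
      obtain ⟨i, hi⟩ := hP.1 B.1 B.2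
      have := congrFun h i
      rw [hPsi _ B i hi, hPsi _ B i hi] at this
      rw [this]
    have h2 : b = b' := by
      funext i
      have := congrFun h i.1
      simpa [Psi, i.2] using this
    rw [h1, h2]
  have himg : (Finset.univ.filter fun a : Fin N → Fin p => colP I a = P) =
      Finset.univ.image Psi := by
    ext a
    simp only [Finset.mem_filter, Finset.mem_univ, true_and, Finset.mem_image]
    constructor
    · intro ha
      have hc : ∀ B : P, ∃ c, fib I a c = B.1 := by
        rintro ⟨B, hB⟩
        have h' : B ∈ colP I a := by rw [ha]; exact hB
        exact ((mem_colP _ _ _).1 h').2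
      choose e he using hc
      have heinj : Function.Injective e := by
        intro B B' h
        apply Subtype.ext
        rw [← he, ← he, h]
      refine ⟨⟨⟨e, heinj⟩, fun i => a i⟩, ?_⟩
      funext i
      by_cases h : i ∈ I
      · have h1 := hblk ⟨i, h⟩
        rw [← he] at h1
        simp only [Psi, h, dif_pos]
        exact ((mem_fib _ _ _ _).1 h1).2.symm
      · simp [Psi, h]
    · rintro ⟨eb, rfl⟩
      have hf : ∀ B : P, fib I (Psi eb) (eb.1 B) = B.1 := by
        intro B
        ext i
        rw [mem_fib]
        constructor
        · rintro ⟨hI, h⟩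
          have h1 := hPsi eb (blk ⟨i, hI⟩) i (hblk ⟨i, hI⟩)
          rw [h] at h1
          have h2 := eb.1.injective h1
          rw [h2]
          exact hblk ⟨i, hI⟩
        · intro hi
          exact ⟨hP.2.1 B.1 B.2 hi, hPsi eb B i hi⟩
      ext B
      rw [mem_colP]
      constructor
      · rintro ⟨⟨i, hi⟩, c, rfl⟩
        rw [mem_fib] at hi
        have h1 := hPsi eb (blk ⟨i, hi.1⟩) i (hblk ⟨i, hi.1⟩)
        rw [← hi.2, h1, hf]
        exact (blk ⟨i, hi.1⟩).2
      · intro hB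
        exact ⟨hP.1 B hB, eb.1 ⟨B, hB⟩, hf ⟨B, hB⟩⟩
  rw [himg, Finset.card_image_of_injective _ hinj, Finset.card_univ, Fintype.card_prod,
    Fintype.card_embedding_eq, Fintype.card_fun, Fintype.card_fin, Fintype.card_coe, mul_comm]
  congr 2
  rw [Fintype.card_subtype_compl, Fintype.card_fin, Fintype.card_coe]

lemma sum_fib {p N : ℕ} {R : Type*} [CommSemiring R] (W : Finset (Fin N) → R) (hW : W ∅ = 1)
    (I : Finset (Fin N)) :
    ∑ a : Fin N → Fin p, ∏ c : Fin p, W (fib I a c) =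
      (p : R) ^ (N - I.card) * ∑ P ∈ parts I, (p.descFactorial P.card : R) * ∏ B ∈ P, W B := by
  classical
  rw [← Finset.sum_fiberwise_of_maps_to (s := Finset.univ) (t := parts I) (g := colP I)
    (fun a _ => (mem_parts _ _).2 (colP_isPart I a)), Finset.mul_sum]
  apply Finset.sum_congr rfl
  intro P hP
  rw [mem_parts] at hP
  have : ∀ a ∈ Finset.univ.filter (fun a : Fin N → Fin p => colP I a = P),
      ∏ c : Fin p, W (fib I a c) = ∏ B ∈ P, W B := by
    intro a ha
    rw [prod_colP W hW, (Finset.mem_filter.1 ha).2]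
  rw [Finset.sum_congr rfl this, Finset.sum_const, card_colP I P hP, nsmul_eq_mul]
  push_cast
  ring

lemma triv_isPart {N : ℕ} (I : Finset (Fin N)) (hI : I.Nonempty) : IsPart I {I} := by
  refine ⟨by simpa using hI, by simp, fun i hi => ⟨I, by simpa using hi, ?_⟩⟩
  rintro B ⟨hB, _⟩
  simpa using hB

lemma sub_of_part {N : ℕ} {I : Finset (Fin N)} {P : Finset (Finset (Fin N))} (hP : IsPart I P)
    (hne : P ≠ {I}) {B : Finset (Fin N)} (hB : B ∈ P) : B ⊂ I := by
  refine Finset.ssubset_iff_subset_ne.2 ⟨hP.2.1 B hB, ?_⟩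
  rintro rfl
  apply hne
  ext C
  rw [Finset.mem_singleton]
  constructor
  · intro hC
    obtain ⟨i, hi⟩ := hP.1 C hC
    exact hP.eq_of_mem hC hB hi (hP.2.1 C hC hi)
  · rintro rfl; exact hB


section
variable (p : ℕ) [Fact p.Prime] {N : ℕ} (s : Fin N → Fin N → ℂ)
    (μ : Measure ℚ_[p]) [SigmaFinite μ] [μ.IsAddHaarMeasure]

lemma pcast_ne_zero : (p : ENNReal) ≠ 0 := by exact_mod_cast (Fact.out : p.Prime).ne_zero

lemma norm_pe (z : ℂ) : ‖(p : ℂ) ^ z‖ = (p : ℝ) ^ z.re :=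
  Complex.norm_natCast_cpow_of_pos (Fact.out : p.Prime).pos z

lemma enorm_pe_ne_zero (z : ℂ) : ‖(p : ℂ) ^ z‖ₑ ≠ 0 := by
  rw [Ne, enorm_eq_zero, Complex.cpow_eq_zero_iff]
  rintro ⟨h, _⟩
  exact (Fact.out : p.Prime).ne_zero (by exact_mod_cast h)

lemma pe_eexp (I : Finset (Fin N)) :
    (p : ℂ) ^ (- eexp I s) = ((p : ℂ) ^ I.card)⁻¹ * p * (p : ℂ) ^ (- sg s I) := by
  have hp0 : (p : ℂ) ≠ 0 := by exact_mod_cast (Fact.out : p.Prime).ne_zero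
  have : - eexp I s = - (I.card : ℂ) + 1 + (- sg s I) := by
    unfold eexp sg pI; ring
  rw [this, Complex.cpow_add _ _ hp0, Complex.cpow_add _ _ hp0, Complex.cpow_neg,
    Complex.cpow_natCast, Complex.cpow_one]

lemma rr (I : Finset (Fin N)) :
    ((p : ENNReal) ^ I.card)⁻¹ * p * ‖(p : ℂ) ^ (- sg s I)‖ₑ = ‖(p : ℂ) ^ (- eexp I s)‖ₑ := by
  have hp0 : (p : ℂ) ≠ 0 := by exact_mod_cast (Fact.out : p.Prime).ne_zero
  rw [pe_eexp, enorm_mul, enorm_mul, enorm_inv (pow_ne_zero _ hp0), enorm_pow]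
  have : ‖(p : ℂ)‖ₑ = p := by simp [enorm_eq_nnnorm]
  rw [this]

lemma rr_lt (I : Finset (Fin N)) : ‖(p : ℂ) ^ (- eexp I s)‖ₑ < 1 ↔ 0 < (eexp I s).re := by
  have h1 : (1 : ℝ) < p := by exact_mod_cast (Fact.out : p.Prime).one_lt
  have h2 : ‖(p : ℂ) ^ (- eexp I s)‖ₑ < 1 ↔ ‖(p : ℂ) ^ (- eexp I s)‖ < 1 := by
    rw [enorm_eq_nnnorm, ← ENNReal.coe_one, ENNReal.coe_lt_coe]; rfl
  rw [h2, norm_pe, Real.rpow_lt_one_iff_of_pos (by linarith)]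
  simp only [Complex.neg_re]
  constructor
  · rintro (h | h)
    · linarith
    · linarith
  · intro h; left; exact ⟨h1, by linarith⟩

lemma pow_fix (I : Finset (Fin N)) :
    ((p : ENNReal) ^ N)⁻¹ * (p : ENNReal) ^ (N - I.card) = ((p : ENNReal) ^ I.card)⁻¹ := by
  have h : I.card ≤ N := by simpa using Finset.card_le_univ I
  have h2 : (p : ENNReal) ^ N = (p : ENNReal) ^ I.card * (p : ENNReal) ^ (N - I.card) := by
    rw [← pow_add]; congr 1; omega
  have h0 := pow_ne_zero (N - I.card) (pcast_ne_zero p)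
  have ht := ENNReal.pow_ne_top (n := N - I.card) (ENNReal.natCast_ne_top p)
  rw [h2, ENNReal.mul_inv (Or.inr ht) (Or.inr h0), mul_assoc,
    ENNReal.inv_mul_cancel h0 ht, mul_one]

lemma pow_fixC (I : Finset (Fin N)) :
    ((p : ℂ) ^ N)⁻¹ * (p : ℂ) ^ (N - I.card) = ((p : ℂ) ^ I.card)⁻¹ := by
  have hp0 : (p : ℂ) ≠ 0 := by exact_mod_cast (Fact.out : p.Prime).ne_zero
  have h : I.card ≤ N := by simpa using Finset.card_le_univ I
  have h2 : (p : ℂ) ^ N = (p : ℂ) ^ I.card * (p : ℂ) ^ (N - I.card) := by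
    rw [← pow_add]; congr 1; omega
  rw [h2]
  field_simp

variable (hμ : μ (Zball p) = 1)
include hμ

lemma prob_zball : IsProbabilityMeasure (μ.restrict (Zball p)) := ⟨by simp [hμ]⟩

lemma kRec0 (I : Finset (Fin N)) :
    ∫⁻ x, ‖gI p s I x‖ₑ ∂(PP p μ N) =
      ((p : ENNReal) ^ N)⁻¹ * ∑ a : Fin N → Fin p, ∏ c : Fin p, kW p μ s (fib I a c) := by
  have := prob_zball p μ hμ
  rw [cov_lint p N μ hμ _ (gI_meas p s I).enorm]
  simp only [lint_phi]

lemma kRec (I : Finset (Fin N)) :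
    ∫⁻ x, ‖gI p s I x‖ₑ ∂(PP p μ N) = ((p : ENNReal) ^ I.card)⁻¹ *
      ∑ P ∈ parts I, (p.descFactorial P.card : ENNReal) * ∏ B ∈ P, kW p μ s B := by
  have := prob_zball p μ hμ
  rw [kRec0 p s μ hμ, sum_fib _ (kW_one p s μ ∅ (by simp)), ← mul_assoc, pow_fix]

lemma zRec (I : Finset (Fin N)) (hi : Integrable (gI p s I) (PP p μ N)) :
    ∫ x, gI p s I x ∂(PP p μ N) = ((p : ℂ) ^ I.card)⁻¹ *
      ∑ P ∈ parts I, (p.descFactorial P.card : ℂ) * ∏ B ∈ P, zW p μ s B := by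
  have := prob_zball p μ hμ
  rw [cov_int p N μ hμ _ (gI_meas p s I) hi]
  simp only [int_phi]
  rw [sum_fib _ (zW_one p s μ ∅ (by simp)), ← mul_assoc, pow_fixC]

lemma kW_ne_zero (I : Finset (Fin N)) : kW p μ s I ≠ 0 :=
  mul_ne_zero (enorm_pe_ne_zero p _) (kI_pos p s μ hμ I)

lemma omega_of_fin (h : ∫⁻ x, ‖gI p s Finset.univ x‖ₑ ∂(PP p μ N) ≠ ⊤) :
    InOmega Finset.univ s := by
  classical
  have := prob_zball p μ hμ
  intro lam _ hcard
  let z : Fin p := ⟨0, (Fact.out : p.Prime).pos⟩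
  let o : Fin p := ⟨1, (Fact.out : p.Prime).one_lt⟩
  have hzo : z ≠ o := by simp [z, o]
  have hfin : kW p μ s lam ≠ ⊤ := by
    let a0 : Fin N → Fin p := fun k => if k ∈ lam then z else o
    have hf : fib Finset.univ a0 z = lam := by
      ext i
      rw [mem_fib]
      by_cases hi : i ∈ lam <;> simp [a0, hi, hzo.symm]
    have h1 : ∏ c : Fin p, kW p μ s (fib Finset.univ a0 c) ≠ ⊤ := by
      intro ht
      apply h
      rw [kRec0 p s μ hμ]
      rw [ENNReal.mul_eq_top]
      left
      refine ⟨ENNReal.inv_ne_zero.mpr (ENNReal.pow_ne_top (ENNReal.natCast_ne_top p)), ?_⟩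
      rw [ENNReal.sum_eq_top]
      exact ⟨a0, Finset.mem_univ _, ht⟩
    intro ht
    apply h1
    rw [← Finset.mul_prod_erase _ _ (Finset.mem_univ z), hf, ht, ENNReal.top_mul]
    rw [Finset.prod_ne_zero_iff]
    intro c _
    exact kW_ne_zero p s μ hμ _
  have hK0 := kI_pos p s μ hμ lam
  have hKt : ∫⁻ x, ‖gI p s lam x‖ₑ ∂(PP p μ N) ≠ ⊤ := by
    intro ht
    apply hfin
    rw [kW, ht, ENNReal.mul_top (enorm_pe_ne_zero p _)]
  have hne : lam.Nonempty := Finset.card_pos.mp (by omega)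
  rw [← rr_lt p, ← rr]
  obtain ⟨i, hi, j, hj, hij⟩ := Finset.one_lt_card.mp hcard
  let a1 : Fin N → Fin p := fun k => if k = i then z else o
  have hP1 : colP lam a1 ∈ parts lam := (mem_parts _ _).2 (colP_isPart _ _)
  have hP1ne : colP lam a1 ≠ {lam} := by
    intro h
    have : lam ∈ colP lam a1 := by rw [h]; simp
    obtain ⟨_, c, hc⟩ := (mem_colP _ _ _).1 this
    have h1 := hi
    have h2 := hj
    rw [← hc, mem_fib] at h1 h2
    have := h1.2.trans h2.2.symm
    simp [a1, hij.symm] at this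
    exact hzo this
  have hd : (p.descFactorial (colP lam a1).card : ENNReal) ≠ 0 := by
    have hc := card_colP (p := p) lam _ (colP_isPart lam a1)
    have : (Finset.univ.filter fun a : Fin N → Fin p => colP lam a = colP lam a1).card ≠ 0 :=
      Finset.card_ne_zero.mpr ⟨a1, by simp⟩
    rw [hc] at this
    exact_mod_cast right_ne_zero_of_mul this
  have hrec := kRec p s μ hμ lam
  rw [← Finset.add_sum_erase _ _ ((mem_parts _ _).2 (triv_isPart lam hne)), mul_add] at hrec
  simp only [Finset.card_singleton, Nat.descFactorial_one, Finset.prod_singleton] at hrec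
  set K := ∫⁻ x, ‖gI p s lam x‖ₑ ∂(PP p μ N) with hK
  have hkW : kW p μ s lam = ‖(p : ℂ) ^ (- sg s lam)‖ₑ * K := rfl
  rw [hkW, ← mul_assoc, ← mul_assoc] at hrec
  set T := ∑ P ∈ (parts lam).erase {lam}, (p.descFactorial P.card : ENNReal) * ∏ B ∈ P, kW p μ s B
  have hT : T ≠ 0 := by
    intro hT
    rw [Finset.sum_eq_zero_iff] at hT
    have := hT _ (Finset.mem_erase.mpr ⟨hP1ne, hP1⟩)
    rw [mul_eq_zero] at this
    rcases this with h | h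
    · exact hd h
    · rw [Finset.prod_eq_zero_iff] at h
      obtain ⟨B, _, hB⟩ := h
      exact kW_ne_zero p s μ hμ B hB
  have hT2 : ((p : ENNReal) ^ lam.card)⁻¹ * T ≠ 0 :=
    mul_ne_zero (ENNReal.inv_ne_zero.mpr (ENNReal.pow_ne_top (ENNReal.natCast_ne_top p))) hT
  by_contra hge
  rw [not_lt] at hge
  have h2 : K ≤ ((p : ENNReal) ^ lam.card)⁻¹ * p * ‖(p : ℂ) ^ (- sg s lam)‖ₑ * K := by
    calc K = 1 * K := (one_mul K).symm
      _ ≤ _ := by gcongr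
  have h3 : ((p : ENNReal) ^ lam.card)⁻¹ * p * ‖(p : ℂ) ^ (- sg s lam)‖ₑ * K ≠ ⊤ := by
    intro ht
    rw [ht, top_add] at hrec
    exact hKt hrec
  have h4 := ENNReal.lt_add_right h3 hT2
  rw [mul_assoc, mul_assoc] at h4 h2
  have := h2.trans_lt h4
  rw [← mul_assoc, ← mul_assoc] at this
  rw [mul_assoc, mul_assoc] at hrec
  rw [mul_assoc, mul_assoc] at this
  exact absurd hrec this.ne

/-- truncation -/
def Dn (p : ℕ) [Fact p.Prime] {N : ℕ} (I : Finset (Fin N)) (n : ℕ) : Set (Fin N → ℚ_[p]) :=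
  {x | ∃ i ∈ I, ∃ j ∈ I, ((p : ℝ)⁻¹) ^ n < ‖x i - x j‖}

omit hμ [SigmaFinite μ] [μ.IsAddHaarMeasure] in
lemma Dn_meas (I : Finset (Fin N)) (n : ℕ) : MeasurableSet (Dn p I n) := by
  have : Dn p I n = ⋃ i ∈ I, ⋃ j ∈ I,
      {x : Fin N → ℚ_[p] | ((p : ℝ)⁻¹) ^ n < ‖x i - x j‖} := by
    ext x; simp [Dn]
  rw [this]
  refine Finset.measurableSet_biUnion _ fun i _ => Finset.measurableSet_biUnion _ fun j _ => ?_
  have h1 : Measurable fun x : Fin N → ℚ_[p] => x i := measurable_pi_apply _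
  have h2 : Measurable fun x : Fin N → ℚ_[p] => x j := measurable_pi_apply _
  exact measurableSet_lt measurable_const (measurable_norm.comp (h1.sub h2))

/-- truncated moments -/
noncomputable def kn (p : ℕ) [Fact p.Prime] {N : ℕ} (s : Fin N → Fin N → ℂ)
    (μ : Measure ℚ_[p]) [SigmaFinite μ] (I : Finset (Fin N)) (n : ℕ) : ENNReal :=
  ∫⁻ x, (Dn p I n).indicator (fun x => ‖gI p s I x‖ₑ) x ∂(PP p μ N)

omit [μ.IsAddHaarMeasure] hμ in
lemma kn_zero (I : Finset (Fin N)) : kn p s μ I 0 = 0 := by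
  unfold kn
  rw [lintegral_eq_zero_iff ((gI_meas p s I).enorm.indicator (Dn_meas p I 0))]
  filter_upwards [ae_zball p N μ] with y hy
  rw [Set.indicator_of_notMem]
  · rfl
  rintro ⟨i, _, j, _, h⟩
  rw [pow_zero, sub_eq_add_neg] at h
  refine absurd h (not_lt.mpr ((Padic.nonarchimedean _ _).trans (max_le (hy i) ?_)))
  rw [norm_neg]; exact hy j

/-- truncated weights -/
noncomputable def Wn (p : ℕ) [Fact p.Prime] {N : ℕ} (s : Fin N → Fin N → ℂ)
    (μ : Measure ℚ_[p]) [SigmaFinite μ] (I : Finset (Fin N)) (n : ℕ) (B : Finset (Fin N)) : ENNReal :=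
  if B = I then ‖(p : ℂ) ^ (- sg s I)‖ₑ * kn p s μ I n else kW p μ s B

lemma kn_phi (I : Finset (Fin N)) (hI : I.Nonempty) (n : ℕ) (a : Fin N → Fin p) :
    ∫⁻ y, (Dn p I (n + 1)).indicator (fun x => ‖gI p s I x‖ₑ) (phiN p a y) ∂(PP p μ N) ≤
      ∏ c : Fin p, Wn p s μ I n (fib I a c) := by
  have := prob_zball p μ hμ
  by_cases h : ∃ c, fib I a c = I
  · obtain ⟨c0, hc0⟩ := h
    have ha : ∀ i ∈ I, a i = c0 := by
      intro i hi
      rw [← hc0] at hi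
      exact ((mem_fib _ _ _ _).1 hi).2
    have hemp : ∀ c, c ≠ c0 → fib I a c = ∅ := by
      intro c hc
      rw [Finset.eq_empty_iff_forall_notMem]
      intro i hi
      have := (mem_fib _ _ _ _).1 hi
      exact hc (this.2.symm.trans (ha i this.1))
    rw [Finset.prod_eq_single c0]
    · rw [hc0, Wn, if_pos rfl, kn, ← lintegral_const_mul]
      · apply lintegral_mono_ae
        filter_upwards [ae_zball p N μ] with y hy
        by_cases hy2 : phiN p a y ∈ Dn p I (n + 1)
        · have hy3 : y ∈ Dn p I n := by
            obtain ⟨i, hi, j, hj, hlt⟩ := hy2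
            refine ⟨i, hi, j, hj, ?_⟩
            have h5 := norm_phi p (a i) (a j) (y i) (y j) (hy i) (hy j)
            rw [if_pos ((ha i hi).trans (ha j hj).symm)] at h5
            unfold phiN at hlt
            rw [h5, pow_succ'] at hlt
            exact lt_of_mul_lt_mul_left hlt (by positivity)
          rw [Set.indicator_of_mem hy2, Set.indicator_of_mem hy3, gI_phi p s I a y hy,
            Finset.prod_eq_single c0, hc0, enorm_mul]
          · intro c _ hc
            obtain ⟨_, h2, h3⟩ := gI_one p s (fib I a c) (by rw [hemp c hc]; simp)
            rw [h2, h3]; simp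
          · simp
        · rw [Set.indicator_of_notMem hy2]; simp
      · exact (gI_meas p s I).enorm.indicator (Dn_meas p I n)
    · intro c _ hc
      rw [hemp c hc, Wn, if_neg hI.ne_empty.symm, kW_one p s μ ∅ (by simp)]
    · simp
  · push Not at h
    have h1 : ∀ c : Fin p, Wn p s μ I n (fib I a c) = kW p μ s (fib I a c) := by
      intro c; rw [Wn, if_neg (h c)]
    rw [Finset.prod_congr rfl (fun c _ => h1 c), ← lint_phi]
    apply lintegral_mono
    intro y
    exact Set.indicator_le_self _ _ _

lemma kn_rec (I : Finset (Fin N)) (hI : I.Nonempty) (n : ℕ) :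
    kn p s μ I (n + 1) ≤ ‖(p : ℂ) ^ (- eexp I s)‖ₑ * kn p s μ I n +
      ((p : ENNReal) ^ I.card)⁻¹ * ∑ P ∈ (parts I).erase {I},
        (p.descFactorial P.card : ENNReal) * ∏ B ∈ P, kW p μ s B := by
  classical
  have := prob_zball p μ hμ
  have h1 : kn p s μ I (n + 1) ≤ ((p : ENNReal) ^ N)⁻¹ *
      ∑ a : Fin N → Fin p, ∏ c : Fin p, Wn p s μ I n (fib I a c) := by
    unfold kn
    rw [cov_lint p N μ hμ _ ((gI_meas p s I).enorm.indicator (Dn_meas p I (n+1)))]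
    gcongr with a
    exact kn_phi p s μ hμ I hI n a
  refine h1.trans (le_of_eq ?_)
  have hW0 : Wn p s μ I n ∅ = 1 := by
    rw [Wn, if_neg hI.ne_empty.symm, kW_one p s μ ∅ (by simp)]
  rw [sum_fib _ hW0, ← mul_assoc, pow_fix,
    ← Finset.add_sum_erase _ _ ((mem_parts _ _).2 (triv_isPart I hI)), mul_add]
  simp only [Finset.card_singleton, Nat.descFactorial_one, Finset.prod_singleton]
  congr 1
  · rw [Wn, if_pos rfl, ← rr]; ring
  · congr 1
    apply Finset.sum_congr rfl
    intro P hP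
    congr 1
    apply Finset.prod_congr rfl
    intro B hB
    rw [Wn, if_neg]
    have hP' := Finset.mem_erase.1 hP
    exact (sub_of_part ((mem_parts _ _).1 hP'.2) hP'.1 hB).ne

lemma k_le_sup (I : Finset (Fin N)) (hI : 1 < I.card) :
    ∫⁻ x, ‖gI p s I x‖ₑ ∂(PP p μ N) ≤ ⨆ n, kn p s μ I n := by
  obtain ⟨i, hi, j, hj, hij⟩ := Finset.one_lt_card.mp hI
  have hp1 : (1 : ℝ) < p := by exact_mod_cast (Fact.out : p.Prime).one_lt
  unfold kn
  rw [← lintegral_iSup]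
  · apply lintegral_mono_ae
    have hd := diag_null p N μ hμ i j hij
    rw [measure_eq_zero_iff_ae_notMem] at hd
    filter_upwards [hd] with x hx
    have hpos : 0 < ‖x i - x j‖ := by
      rw [norm_pos_iff, sub_ne_zero]; exact hx
    obtain ⟨n, hn⟩ := exists_pow_lt_of_lt_one hpos (inv_lt_one_of_one_lt₀ hp1)
    refine le_iSup_of_le n ?_
    rw [Set.indicator_of_mem]
    exact ⟨i, hi, j, hj, hn⟩
  · intro n
    exact (gI_meas p s I).enorm.indicator (Dn_meas p I n)
  · intro m n hmn x
    apply Set.indicator_le_indicator_of_subset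
    · rintro x ⟨i, hi, j, hj, h⟩
      refine ⟨i, hi, j, hj, lt_of_le_of_lt ?_ h⟩
      exact pow_le_pow_of_le_one (by positivity) (inv_le_one_of_one_le₀ hp1.le) hmn
    · intro x; exact zero_le

lemma fin_of_omega (h : InOmega Finset.univ s) (I : Finset (Fin N)) :
    kW p μ s I ≠ ⊤ := by
  classical
  have := prob_zball p μ hμ
  induction I using Finset.strongInduction with
  | H I ih =>
    by_cases hI : I.card ≤ 1
    · rw [kW_one p s μ I hI]; simp
    · push Not at hI
      have hne : I.Nonempty := Finset.card_pos.mp (by omega)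
      set r := ‖(p : ℂ) ^ (- eexp I s)‖ₑ with hr
      have hr1 : r < 1 := (rr_lt p s I).2 (h I (Finset.subset_univ _) hI)
      set C := ((p : ENNReal) ^ I.card)⁻¹ * ∑ P ∈ (parts I).erase {I},
        (p.descFactorial P.card : ENNReal) * ∏ B ∈ P, kW p μ s B with hC
      have hCt : C ≠ ⊤ := by
        apply ENNReal.mul_ne_top
        · exact ENNReal.inv_ne_top.mpr (pow_ne_zero _ (pcast_ne_zero p))
        · rw [ENNReal.sum_ne_top]
          intro P hP
          have hP' := Finset.mem_erase.1 hP
          apply ENNReal.mul_ne_top (ENNReal.natCast_ne_top _)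
          apply ENNReal.prod_ne_top
          intro B hB
          exact ih B (sub_of_part ((mem_parts _ _).1 hP'.2) hP'.1 hB)
      have h1r : 1 - r ≠ 0 := (tsub_pos_of_lt hr1).ne'
      have h1rt : 1 - r ≠ ⊤ := ENNReal.sub_ne_top ENNReal.one_ne_top
      have hM : r * (C * (1 - r)⁻¹) + C = C * (1 - r)⁻¹ := by
        have h2 : C = (1 - r) * (C * (1 - r)⁻¹) := by
          rw [mul_comm C, ← mul_assoc, ENNReal.mul_inv_cancel h1r h1rt, one_mul]
        nth_rewrite 2 [h2]
        rw [← add_mul, add_tsub_cancel_of_le hr1.le, one_mul]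
      have hb : ∀ n, kn p s μ I n ≤ C * (1 - r)⁻¹ := by
        intro n
        induction n with
        | zero => rw [kn_zero]; exact zero_le
        | succ n ihn =>
          refine (kn_rec p s μ hμ I hne n).trans ?_
          rw [← hM]
          gcongr
      apply ENNReal.mul_ne_top enorm_ne_top
      refine ne_top_of_le_ne_top ?_ ((k_le_sup p s μ hμ I hI).trans (iSup_le hb))
      exact ENNReal.mul_ne_top hCt (ENNReal.inv_ne_top.mpr h1r)

lemma int_of_omega (h : InOmega Finset.univ s) (I : Finset (Fin N)) :
    Integrable (gI p s I) (PP p μ N) := by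
  refine ⟨(gI_meas p s I).aestronglyMeasurable, ?_⟩
  rw [HasFiniteIntegral, lt_top_iff_ne_top]
  intro ht
  apply fin_of_omega p s μ hμ h I
  rw [kW, ht, ENNReal.mul_top (enorm_pe_ne_zero p _)]

lemma zW_rec (h : InOmega Finset.univ s) (I : Finset (Fin N)) (hI : 1 < I.card) :
    zW p μ s I = ∑ P ∈ (parts I).erase {I},
      (((p - 1).descFactorial (P.card - 1) : ℂ) / ((p : ℂ) ^ eexp I s - 1)) *
        ∏ B ∈ P, zW p μ s B := by
  classical
  have hp0 : (p : ℂ) ≠ 0 := by exact_mod_cast (Fact.out : p.Prime).ne_zero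
  have hne : I.Nonempty := Finset.card_pos.mp (by omega)
  have hrec := zRec p s μ hμ I (int_of_omega p s μ hμ h I)
  rw [← Finset.add_sum_erase _ _ ((mem_parts _ _).2 (triv_isPart I hne))] at hrec
  simp only [Finset.card_singleton, Nat.descFactorial_one, Finset.prod_singleton] at hrec
  have hd : ∀ P ∈ (parts I).erase {I}, (p.descFactorial P.card : ℂ) * ∏ B ∈ P, zW p μ s B =
      p * (((p - 1).descFactorial (P.card - 1) : ℂ) * ∏ B ∈ P, zW p μ s B) := by
    intro P hP
    have hP' := (mem_parts _ _).1 (Finset.mem_erase.1 hP).2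
    obtain ⟨i, hi⟩ := hne
    obtain ⟨B, ⟨hB, _⟩, _⟩ := hP'.2.2 i hi
    have hc : 0 < P.card := Finset.card_pos.mpr ⟨B, hB⟩
    obtain ⟨k, hk⟩ : ∃ k, P.card = k + 1 := ⟨P.card - 1, by omega⟩
    obtain ⟨m, hm⟩ : ∃ m, p = m + 1 := ⟨p - 1, by have := (Fact.out : p.Prime).pos; omega⟩
    have h3 : p.descFactorial P.card = p * (p - 1).descFactorial (P.card - 1) := by
      rw [hk]
      conv_lhs => rw [hm]
      rw [Nat.succ_descFactorial_succ]
      conv_rhs => rw [hm]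
      simp
    rw [h3]; push_cast; ring
  rw [Finset.sum_congr rfl hd, ← Finset.mul_sum] at hrec
  set T := ∑ P ∈ (parts I).erase {I}, ((p - 1).descFactorial (P.card - 1) : ℂ) *
    ∏ B ∈ P, zW p μ s B with hT
  set Z := ∫ x, gI p s I x ∂(PP p μ N) with hZ
  have hzW : zW p μ s I = (p : ℂ) ^ (- sg s I) * Z := rfl
  have he := pe_eexp p s I
  have hE : (p : ℂ) ^ eexp I s * (p : ℂ) ^ (- eexp I s) = 1 := by
    rw [← Complex.cpow_add _ _ hp0]; simp
  have hE1 : (p : ℂ) ^ eexp I s - 1 ≠ 0 := by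
    intro h0
    rw [sub_eq_zero] at h0
    have h4 : ‖(p : ℂ) ^ (- eexp I s)‖ₑ < 1 := (rr_lt p s I).2 (h I (Finset.subset_univ _) hI)
    rw [h0, one_mul] at hE
    rw [hE] at h4
    simp at h4
  have hsum : ∑ P ∈ (parts I).erase {I},
      (((p - 1).descFactorial (P.card - 1) : ℂ) / ((p : ℂ) ^ eexp I s - 1)) *
        ∏ B ∈ P, zW p μ s B = T / ((p : ℂ) ^ eexp I s - 1) := by
    rw [hT, Finset.sum_div]
    exact Finset.sum_congr rfl fun P _ => by ring
  rw [hsum, eq_div_iff hE1]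
  have h5 : (p : ℂ) ^ (- eexp I s) * (zW p μ s I + T) = zW p μ s I := by
    rw [he]
    nth_rewrite 2 [hzW]
    rw [hrec]
    ring
  linear_combination (-(p : ℂ) ^ eexp I s) * h5 + (zW p μ s I + T) * hE

end

section comb
variable {N : ℕ}

/-- refinement -/
def Refi (P Q : Finset (Finset (Fin N))) : Prop := ∀ B ∈ Q, ∃ C ∈ P, B ⊆ C

/-- parts of `Q` inside `lam` -/
def flt (Q : Finset (Finset (Fin N))) (lam : Finset (Fin N)) : Finset (Finset (Fin N)) :=
  Q.filter (fun B => B ⊆ lam)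

lemma mem_flt (Q : Finset (Finset (Fin N))) (lam B : Finset (Fin N)) :
    B ∈ flt Q lam ↔ B ∈ Q ∧ B ⊆ lam := by simp [flt]

lemma IsPart.disj {I : Finset (Fin N)} {P : Finset (Finset (Fin N))} (h : IsPart I P)
    {B C D : Finset (Fin N)} (hB : B ∈ P) (hC : C ∈ P) (hD : D.Nonempty) (h1 : D ⊆ B)
    (h2 : D ⊆ C) : B = C := by
  obtain ⟨i, hi⟩ := hD
  exact h.eq_of_mem hB hC (h1 hi) (h2 hi)

lemma flt_isPart {P Q : Finset (Finset (Fin N))} (hP : IsPart Finset.univ P)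
    (hQ : IsPart Finset.univ Q) (hr : Refi P Q) {lam : Finset (Fin N)} (hl : lam ∈ P) :
    IsPart lam (flt Q lam) := by
  refine ⟨fun B hB => hQ.1 B ((mem_flt _ _ _).1 hB).1, fun B hB => ((mem_flt _ _ _).1 hB).2, ?_⟩
  intro i hi
  obtain ⟨B, ⟨hB, hiB⟩, hu⟩ := hQ.2.2 i (Finset.mem_univ i)
  obtain ⟨C, hC, hBC⟩ := hr B hB
  have : C = lam := hP.eq_of_mem hC hl (hBC hiB) hi
  subst this
  refine ⟨B, ⟨(mem_flt _ _ _).2 ⟨hB, hBC⟩, hiB⟩, ?_⟩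
  rintro D ⟨hD, hiD⟩
  exact hu D ⟨((mem_flt _ _ _).1 hD).1, hiD⟩

lemma flt_biUnion {P Q : Finset (Finset (Fin N))} (hr : Refi P Q) :
    P.biUnion (flt Q) = Q := by
  ext B
  simp only [Finset.mem_biUnion, mem_flt]
  constructor
  · rintro ⟨_, _, h, _⟩; exact h
  · intro h
    obtain ⟨C, hC, hBC⟩ := hr B h
    exact ⟨C, hC, h, hBC⟩

lemma flt_disj {P Q : Finset (Finset (Fin N))} (hP : IsPart Finset.univ P)
    (hQ : IsPart Finset.univ Q) : (P : Set (Finset (Fin N))).PairwiseDisjoint (flt Q) := by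
  intro a ha b hb hab
  rw [Function.onFun, Finset.disjoint_left]
  intro B h1 h2
  rw [mem_flt] at h1 h2
  exact hab (hP.disj ha hb (hQ.1 B h1.1) h1.2 h2.2)

lemma part_eq_triv {I : Finset (Fin N)} {P : Finset (Finset (Fin N))} (h : IsPart I P)
    (hI : I ∈ P) : P = {I} := by
  ext B
  rw [Finset.mem_singleton]
  constructor
  · intro hB
    exact h.disj hB hI (h.1 B hB) subset_rfl (h.2.1 B hB)
  · rintro rfl; exact hI

/-- step relation -/
def RR (P Q : Finset (Finset (Fin N))) : Prop :=
  IsPart Finset.univ Q ∧ Refi P Q ∧ ∀ B ∈ P, B ∈ Q → B.card = 1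

/-- local weight -/
noncomputable def GG (f : Finset (Fin N) → ℕ → ℂ) (lam : Finset (Fin N))
    (σ : Finset (Finset (Fin N))) : ℂ := if 1 < lam.card then f lam σ.card else 1

/-- step weight -/
noncomputable def ww (f : Finset (Fin N) → ℕ → ℂ) (P Q : Finset (Finset (Fin N))) : ℂ :=
  ∏ lam ∈ P, GG f lam (flt Q lam)

open Classical in
/-- allowed local partitions -/
noncomputable def TT (lam : Finset (Fin N)) : Finset (Finset (Finset (Fin N))) :=
  (parts lam).filter (fun σ => lam ∈ σ → lam.card = 1)

lemma mem_TT (lam : Finset (Fin N)) (σ : Finset (Finset (Fin N))) :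
    σ ∈ TT lam ↔ IsPart lam σ ∧ (lam ∈ σ → lam.card = 1) := by simp [TT, mem_parts]

lemma W_TT (f : Finset (Fin N) → ℕ → ℂ) (W : Finset (Fin N) → ℂ)
    (h1 : ∀ B, B.card ≤ 1 → W B = 1)
    (h2 : ∀ I, 1 < I.card → W I = ∑ P ∈ (parts I).erase {I}, f I P.card * ∏ B ∈ P, W B)
    (lam : Finset (Fin N)) (hl : lam.Nonempty) :
    W lam = ∑ σ ∈ TT lam, GG f lam σ * ∏ B ∈ σ, W B := by
  classical
  by_cases h : 1 < lam.card
  · rw [h2 lam h]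
    apply Finset.sum_congr
    · ext σ
      rw [mem_TT, Finset.mem_erase, mem_parts]
      constructor
      · rintro ⟨a, b⟩
        exact ⟨b, fun h3 => absurd (part_eq_triv b h3) a⟩
      · rintro ⟨a, b⟩
        refine ⟨?_, a⟩
        rintro rfl
        have := b (by simp)
        omega
    · intro σ _
      simp [GG, h]
  · have hc : lam.card = 1 := by
      have := hl.card_pos
      omega
    have hT : TT lam = {{lam}} := by
      ext σ
      rw [mem_TT, Finset.mem_singleton]
      constructor
      · rintro ⟨a, -⟩
        apply part_eq_triv a
        obtain ⟨i, hi⟩ := Finset.card_eq_one.1 hc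
        obtain ⟨B, ⟨hB, hiB⟩, -⟩ := a.2.2 i (by simp [hi])
        have hs := a.2.1 B hB
        have : B = lam := by
          apply Finset.Subset.antisymm hs
          rw [hi]; simpa using hiB
        rwa [← this]
      · rintro rfl
        exact ⟨triv_isPart lam hl, fun _ => hc⟩
    rw [hT]
    simp [GG, h, h1 lam (by omega)]

lemma one_step (f : Finset (Fin N) → ℕ → ℂ) (W : Finset (Fin N) → ℂ)
    (h1 : ∀ B, B.card ≤ 1 → W B = 1)
    (h2 : ∀ I, 1 < I.card → W I = ∑ P ∈ (parts I).erase {I}, f I P.card * ∏ B ∈ P, W B)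
    (P : Finset (Finset (Fin N))) (hP : IsPart Finset.univ P)
    (A : Finset (Finset (Finset (Fin N)))) (hA : ∀ Q, Q ∈ A ↔ RR P Q) :
    ∏ lam ∈ P, W lam = ∑ Q ∈ A, ww f P Q * ∏ B ∈ Q, W B := by
  classical
  rw [← Finset.prod_coe_sort P]
  have e : ∀ lam : P, W lam = ∑ σ ∈ TT lam.1, GG f lam σ * ∏ B ∈ σ, W B :=
    fun lam => W_TT f W h1 h2 lam.1 (hP.1 _ lam.2)
  rw [Finset.prod_congr rfl fun lam _ => e lam, Finset.prod_univ_sum]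
  have key : ∀ x : P → Finset (Finset (Fin N)), (∀ l, x l ∈ TT l.1) →
      ∀ l : P, flt (Finset.univ.biUnion x) l.1 = x l := by
    intro x hx l
    ext B
    simp only [mem_flt, Finset.mem_biUnion, Finset.mem_univ, true_and]
    constructor
    · rintro ⟨⟨l', hB⟩, hs⟩
      have h' := ((mem_TT _ _).1 (hx l')).1
      have : l'.1 = l.1 := hP.disj l'.2 l.2 (h'.1 B hB) (h'.2.1 B hB) hs
      rwa [← Subtype.ext this]
    · intro hB
      exact ⟨⟨l, hB⟩, ((mem_TT _ _).1 (hx l)).1.2.1 B hB⟩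
  refine Finset.sum_nbij' (fun x => Finset.univ.biUnion x) (fun Q l => flt Q l.1) ?_ ?_ ?_ ?_ ?_
  · intro x hx
    rw [Fintype.mem_piFinset] at hx
    rw [hA]
    have hx' := fun l => (mem_TT _ _).1 (hx l)
    refine ⟨⟨?_, fun _ _ => Finset.subset_univ _, ?_⟩, ?_, ?_⟩
    · intro B hB
      obtain ⟨l, -, hB⟩ := Finset.mem_biUnion.1 hB
      exact (hx' l).1.1 B hB
    · intro i _
      obtain ⟨l, ⟨hl, hil⟩, -⟩ := hP.2.2 i (Finset.mem_univ i)
      obtain ⟨B, ⟨hB, hiB⟩, hu⟩ := (hx' ⟨l, hl⟩).1.2.2 i hil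
      refine ⟨B, ⟨Finset.mem_biUnion.2 ⟨_, Finset.mem_univ _, hB⟩, hiB⟩, ?_⟩
      rintro C ⟨hC, hiC⟩
      obtain ⟨l', -, hC⟩ := Finset.mem_biUnion.1 hC
      have : l' = ⟨l, hl⟩ := Subtype.ext
        (hP.eq_of_mem l'.2 hl ((hx' l').1.2.1 C hC hiC) hil)
      subst this
      exact hu C ⟨hC, hiC⟩
    · intro B hB
      obtain ⟨l, -, hB⟩ := Finset.mem_biUnion.1 hB
      exact ⟨l.1, l.2, (hx' l).1.2.1 B hB⟩
    · intro B hB hB'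
      apply (hx' ⟨B, hB⟩).2
      rw [← key x hx ⟨B, hB⟩, mem_flt]
      exact ⟨hB', subset_rfl⟩
  · intro Q hQ
    rw [hA] at hQ
    rw [Fintype.mem_piFinset]
    intro l
    rw [mem_TT]
    exact ⟨flt_isPart hP hQ.1 hQ.2.1 l.2, fun h => hQ.2.2 _ l.2 ((mem_flt _ _ _).1 h).1⟩
  · intro x hx
    rw [Fintype.mem_piFinset] at hx
    funext l
    exact key x hx l
  · intro Q hQ
    rw [hA] at hQ
    conv_rhs => rw [← flt_biUnion hQ.2.1]
    ext B
    simp [Finset.mem_biUnion]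
  · intro x hx
    rw [Fintype.mem_piFinset] at hx
    rw [Finset.prod_mul_distrib]
    have hd : ((Finset.univ : Finset P) : Set P).PairwiseDisjoint x := by
      intro a _ b _ hab
      rw [Function.onFun, Finset.disjoint_left]
      intro B ha hb
      have ha' := ((mem_TT _ _).1 (hx a)).1
      have hb' := ((mem_TT _ _).1 (hx b)).1
      exact hab (Subtype.ext (hP.disj a.2 b.2 (ha'.1 B ha) (ha'.2.1 B ha) (hb'.2.1 B hb)))
    rw [Finset.prod_biUnion hd]
    congr 1
    rw [ww, ← Finset.prod_coe_sort P]
    exact Finset.prod_congr rfl fun l _ => by rw [key x hx l]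

/-- singletons -/
def bot (N : ℕ) : Finset (Finset (Fin N)) := Finset.univ.image fun i => {i}

lemma mem_bot (B : Finset (Fin N)) : B ∈ bot N ↔ B.card = 1 := by
  simp only [bot, Finset.mem_image, Finset.mem_univ, true_and, Finset.card_eq_one, eq_comm]

lemma bot_isPart : IsPart Finset.univ (bot N) := by
  refine ⟨?_, fun _ _ => Finset.subset_univ _, ?_⟩
  · intro B hB
    rw [mem_bot] at hB
    exact Finset.card_pos.1 (by omega)
  · intro i _
    refine ⟨{i}, ⟨by simp [mem_bot], by simp⟩, ?_⟩
    rintro B ⟨hB, hi⟩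
    rw [mem_bot, Finset.card_eq_one] at hB
    obtain ⟨j, rfl⟩ := hB
    rw [Finset.mem_singleton] at hi
    rw [hi]

lemma card_bot : (bot N).card = N := by
  rw [bot, Finset.card_image_of_injective _ Finset.singleton_injective]
  simp

lemma eq_bot {P : Finset (Finset (Fin N))} (hP : IsPart Finset.univ P)
    (h : ∀ B ∈ P, B.card = 1) : P = bot N := by
  ext B
  rw [mem_bot]
  refine ⟨h B, fun hB => ?_⟩
  obtain ⟨i, rfl⟩ := Finset.card_eq_one.1 hB
  obtain ⟨C, ⟨hC, hi⟩, -⟩ := hP.2.2 i (Finset.mem_univ i)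
  obtain ⟨j, rfl⟩ := Finset.card_eq_one.1 (h C hC)
  rw [Finset.mem_singleton] at hi
  rwa [hi]

lemma RR_bot_left {Q : Finset (Finset (Fin N))} (h : RR (bot N) Q) : Q = bot N := by
  apply eq_bot h.1
  intro B hB
  obtain ⟨C, hC, hBC⟩ := h.2.1 B hB
  rw [mem_bot] at hC
  have h3 := Finset.card_le_card hBC
  have h4 := (h.1.1 B hB).card_pos
  omega

lemma RR_bot_right {P : Finset (Finset (Fin N))} (hP : IsPart Finset.univ P) : RR P (bot N) := by
  refine ⟨bot_isPart, ?_, fun B _ hB => (mem_bot B).1 hB⟩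
  intro B hB
  rw [mem_bot, Finset.card_eq_one] at hB
  obtain ⟨i, rfl⟩ := hB
  obtain ⟨C, ⟨hC, hi⟩, -⟩ := hP.2.2 i (Finset.mem_univ i)
  exact ⟨C, hC, by simpa using hi⟩

lemma RR_card {P Q : Finset (Finset (Fin N))} (hP : IsPart Finset.univ P) (h : RR P Q)
    (hb : P ≠ bot N) : P.card < Q.card := by
  classical
  have e : Q.card = ∑ lam ∈ P, (flt Q lam).card := by
    rw [← Finset.card_biUnion (flt_disj hP h.1), flt_biUnion h.2.1]
  have hpos : ∀ lam ∈ P, 1 ≤ (flt Q lam).card := by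
    intro lam hl
    obtain ⟨i, hi⟩ := hP.1 lam hl
    obtain ⟨B, ⟨hB, _⟩, -⟩ := (flt_isPart hP h.1 h.2.1 hl).2.2 i hi
    exact Finset.card_pos.2 ⟨B, hB⟩
  have hex : ∃ lam ∈ P, lam.card ≠ 1 := by
    by_contra hc
    push Not at hc
    exact hb (eq_bot hP hc)
  obtain ⟨lam, hl, hc⟩ := hex
  have hgt : 1 < (flt Q lam).card := by
    have h0 := hpos lam hl
    by_contra h3
    have h4 : (flt Q lam).card = 1 := by omega
    obtain ⟨B, hB⟩ := Finset.card_eq_one.1 h4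
    have hp := flt_isPart hP h.1 h.2.1 hl
    have hBm : B ∈ flt Q lam := by simp [hB]
    have : B = lam := by
      apply Finset.Subset.antisymm (hp.2.1 B hBm)
      intro i hi
      obtain ⟨C, ⟨hC, hiC⟩, -⟩ := hp.2.2 i hi
      rw [hB, Finset.mem_singleton] at hC
      rwa [← hC]
    rw [this] at hBm
    exact hc (h.2.2 lam hl ((mem_flt _ _ _).1 hBm).1)
  rw [e, Finset.card_eq_sum_ones]
  exact Finset.sum_lt_sum hpos ⟨lam, hl, hgt⟩

open Classical in
/-- cons on sequences -/
def scons (P : Finset (Finset (Fin N))) (c : ℕ → Finset (Finset (Fin N))) (k : ℕ) :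
    Finset (Finset (Fin N)) := Nat.casesOn k P c

open Classical in
/-- paths of length `n` ending in `bot` -/
noncomputable def paths (N : ℕ) : ℕ → Finset (Finset (Fin N)) →
    Finset (ℕ → Finset (Finset (Fin N)))
  | 0, P => if P = bot N then {fun _ => bot N} else ∅
  | n + 1, P => (Finset.univ.filter (fun Q => RR P Q)).biUnion
      fun Q => (paths N n Q).image (scons P)

lemma mem_paths (n : ℕ) : ∀ (P : Finset (Finset (Fin N))) (c : ℕ → Finset (Finset (Fin N))),
    c ∈ paths N n P ↔ c 0 = P ∧ (∀ k < n, RR (c k) (c (k + 1))) ∧ ∀ k, n ≤ k → c k = bot N := by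
  classical
  induction n with
  | zero =>
    intro P c
    simp only [paths]
    split_ifs with h
    · rw [Finset.mem_singleton]
      constructor
      · rintro rfl; simp [h]
      · rintro ⟨-, -, h3⟩
        funext k; exact h3 k (Nat.zero_le k)
    · simp only [Finset.notMem_empty, false_iff]
      rintro ⟨h1, -, h3⟩
      exact h (h1 ▸ h3 0 le_rfl)
  | succ n ih =>
    intro P c
    simp only [paths, Finset.mem_biUnion, Finset.mem_filter, Finset.mem_univ, true_and,
      Finset.mem_image]
    constructor
    · rintro ⟨Q, hR, d, hd, rfl⟩
      rw [ih] at hd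
      obtain ⟨d0, d1, d2⟩ := hd
      refine ⟨rfl, ?_, ?_⟩
      · intro k hk
        cases k with
        | zero => show RR P (d 0); rwa [d0]
        | succ k => exact d1 k (by omega)
      · intro k hk
        cases k with
        | zero => omega
        | succ k => exact d2 k (by omega)
    · rintro ⟨h1, h2, h3⟩
      refine ⟨c 1, ?_, fun k => c (k + 1), ?_, ?_⟩
      · rw [← h1]; exact h2 0 (by omega)
      · rw [ih]
        exact ⟨rfl, fun k hk => h2 (k + 1) (by omega), fun k hk => h3 (k + 1) (by omega)⟩
      · funext k
        cases k with
        | zero => exact h1.symm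
        | succ k => rfl

lemma sum_paths (f : Finset (Fin N) → ℕ → ℂ) (W : Finset (Fin N) → ℂ)
    (h1 : ∀ B, B.card ≤ 1 → W B = 1)
    (h2 : ∀ I, 1 < I.card → W I = ∑ P ∈ (parts I).erase {I}, f I P.card * ∏ B ∈ P, W B)
    (n : ℕ) : ∀ (P : Finset (Finset (Fin N))), IsPart Finset.univ P → N ≤ P.card + n →
    ∑ c ∈ paths N n P, ∏ k ∈ Finset.range n, ww f (c k) (c (k + 1)) = ∏ lam ∈ P, W lam := by
  classical
  induction n with
  | zero =>
    intro P hP hc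
    have hb : P = bot N := by
      by_contra hb
      have := RR_card hP (RR_bot_right hP) hb
      rw [card_bot] at this
      omega
    simp only [paths, hb, if_true]
    rw [Finset.sum_singleton, Finset.range_zero, Finset.prod_empty]
    symm
    apply Finset.prod_eq_one
    intro B hB
    rw [mem_bot] at hB
    exact h1 B (by omega)
  | succ n ih =>
    intro P hP hc
    rw [one_step f W h1 h2 P hP (Finset.univ.filter (fun Q => RR P Q)) (by simp)]
    simp only [paths]
    rw [Finset.sum_biUnion]
    · apply Finset.sum_congr rfl
      intro Q hQ
      have hR : RR P Q := by simpa using hQ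
      have hcQ : N ≤ Q.card + n := by
        by_cases hb : P = bot N
        · subst hb
          rw [RR_bot_left hR, card_bot]; omega
        · have := RR_card hP hR hb
          omega
      rw [Finset.sum_image, ← ih Q hR.1 hcQ, Finset.mul_sum]
      · apply Finset.sum_congr rfl
        intro c hc
        rw [Finset.prod_range_succ']
        have h0 := ((mem_paths n Q c).1 hc).1
        rw [mul_comm]
        congr 1
        show ww f P (c 0) = _
        rw [h0]
      · intro c _ d _ h
        funext k
        exact congrFun h (k + 1)
    · intro Q hQ Q' hQ' hne
      rw [Function.onFun, Finset.disjoint_left]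
      intro c hc hc'
      rw [Finset.mem_image] at hc hc'
      obtain ⟨d, hd, rfl⟩ := hc
      obtain ⟨d', hd', h⟩ := hc'
      have e1 := ((mem_paths n Q d).1 hd).1
      have e2 := ((mem_paths n Q' d').1 hd').1
      have e3 : d' 0 = d 0 := congrFun h 1
      exact hne (by rw [← e1, ← e2, e3])

end comb

section chains
variable {N : ℕ}

lemma SplChain.isPart (S : SplChain N Finset.univ) {k : ℕ} (hk : k ≤ S.L) :
    IsPart Finset.univ (S.Λ k) := ⟨S.nonempty_mem k hk, S.subset_mem k hk, S.cover k hk⟩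

lemma SplChain.last' (S : SplChain N Finset.univ) : S.Λ S.L = bot N := S.last

lemma SplChain.mem_branches (S : SplChain N Finset.univ) (lam : Finset (Fin N)) :
    lam ∈ S.branches ↔ ∃ k < S.L, lam ∈ S.Λ k ∧ 1 < lam.card := by
  simp only [SplChain.branches, Finset.mem_sdiff, Finset.mem_biUnion, Finset.mem_range]
  rw [S.last', mem_bot]
  constructor
  · rintro ⟨⟨k, hk, h⟩, h1⟩
    have := ((S.isPart hk.le).1 lam h).card_pos
    exact ⟨k, hk, h, by omega⟩
  · rintro ⟨k, hk, h, h1⟩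
    exact ⟨⟨k, hk, h⟩, by omega⟩

lemma SplChain.RR_of_reduced (S : SplChain N Finset.univ) (hS : S.Reduced) {k : ℕ}
    (hk : k < S.L) : RR (S.Λ k) (S.Λ (k + 1)) := by
  refine ⟨S.isPart hk, S.refines k hk, ?_⟩
  intro B hB hB'
  by_contra hc
  have := ((S.isPart hk.le).1 B hB).card_pos
  have hb : B ∈ S.branches := (S.mem_branches B).2 ⟨k, hk, hB, by omega⟩
  have e1 := (hS B hb k hk.le).1 hB
  have e2 := (hS B hb (k + 1) hk).1 hB'
  omega

lemma SplChain.ne_bot (S : SplChain N Finset.univ) (hS : S.Reduced) {k : ℕ}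
    (hk : k < S.L) : S.Λ k ≠ bot N := by
  intro h
  have h1 := S.RR_of_reduced hS hk
  rw [h] at h1
  exact S.strict k hk ((RR_bot_left h1).trans h.symm)

lemma SplChain.L_le (S : SplChain N Finset.univ) (hS : S.Reduced) : S.L ≤ N := by
  have h : ∀ k, k ≤ S.L → k ≤ (S.Λ k).card := by
    intro k
    induction k with
    | zero => intro _; exact Nat.zero_le _
    | succ k ih =>
      intro hk
      have := RR_card (S.isPart (by omega)) (S.RR_of_reduced hS hk) (S.ne_bot hS hk)
      have := ih (by omega)
      omega
  have := h S.L le_rfl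
  rwa [S.last', card_bot] at this

/-- the path of a chain -/
def SplChain.path (S : SplChain N Finset.univ) (k : ℕ) : Finset (Finset (Fin N)) :=
  if k ≤ S.L then S.Λ k else bot N

lemma SplChain.path_le (S : SplChain N Finset.univ) {k : ℕ} (h : k ≤ S.L) :
    S.path k = S.Λ k := if_pos h

lemma SplChain.path_ge (S : SplChain N Finset.univ) {k : ℕ} (h : S.L ≤ k) :
    S.path k = bot N := by
  rcases h.eq_or_lt with h | h
  · rw [← h, S.path_le le_rfl, S.last']
  · exact if_neg (by omega)

lemma SplChain.path_eq_bot (S : SplChain N Finset.univ) (hS : S.Reduced) (k : ℕ) :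
    S.path k = bot N ↔ S.L ≤ k := by
  refine ⟨fun h => ?_, S.path_ge⟩
  by_contra hc
  rw [S.path_le (by omega)] at h
  exact S.ne_bot hS (by omega) h

lemma SplChain.path_mem (S : SplChain N Finset.univ) (hS : S.Reduced) :
    S.path ∈ paths N N {Finset.univ} := by
  rw [mem_paths]
  refine ⟨by rw [S.path_le (Nat.zero_le _), S.first], ?_, ?_⟩
  · intro k _
    by_cases h : k < S.L
    · rw [S.path_le h.le, S.path_le h]
      exact S.RR_of_reduced hS h
    · rw [S.path_ge (by omega), S.path_ge (by omega)]
      exact RR_bot_right bot_isPart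
  · intro k hk
    exact S.path_ge ((S.L_le hS).trans hk)

lemma SplChain.path_inj (S T : SplChain N Finset.univ) (hS : S.Reduced) (hT : T.Reduced)
    (h : S.path = T.path) : S = T := by
  have hL : S.L = T.L := by
    apply le_antisymm
    · rw [← S.path_eq_bot hS, h, T.path_eq_bot hT]
    · rw [← T.path_eq_bot hT, ← h, S.path_eq_bot hS]
  have hΛ : S.Λ = T.Λ := by
    funext k
    by_cases hk : k ≤ S.L
    · rw [← S.path_le hk, h, T.path_le (hL ▸ hk)]
    · rw [S.trailing k (by omega), T.trailing k (by omega)]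
  cases S; cases T
  simp only at hL hΛ
  subst hL hΛ
  rfl

lemma SplChain.exists_path (c : ℕ → Finset (Finset (Fin N))) (hN : 2 ≤ N)
    (hc : c ∈ paths N N {Finset.univ}) :
    ∃ S : SplChain N Finset.univ, S.Reduced ∧ S.path = c := by
  classical
  rw [mem_paths] at hc
  obtain ⟨c0, c1, c2⟩ := hc
  have hex : ∃ k, c k = bot N := ⟨N, c2 N le_rfl⟩
  obtain ⟨L, hL, hmin⟩ : ∃ L, c L = bot N ∧ ∀ k < L, c k ≠ bot N :=
    ⟨Nat.find hex, Nat.find_spec hex, fun k hk => Nat.find_min hex hk⟩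
  have hLN : L ≤ N := by
    by_contra h
    exact hmin N (by omega) (c2 N le_rfl)
  have hne : (Finset.univ : Finset (Fin N)).Nonempty := ⟨⟨0, by omega⟩, Finset.mem_univ _⟩
  have hpart : ∀ k ≤ L, IsPart Finset.univ (c k) := by
    intro k hk
    cases k with
    | zero => rw [c0]; exact triv_isPart _ hne
    | succ k => exact (c1 k (by omega)).1
  have hbot : ∀ k, L ≤ k → c k = bot N := by
    intro k hk
    induction k, hk using Nat.le_induction with
    | base => exact hL
    | succ k hk ih =>
      by_cases h : k < N
      · have := c1 k h
        rw [ih] at this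
        exact RR_bot_left this
      · exact c2 _ (by omega)
  have hval : ∀ k ≤ L, (if k ≤ L then c k else ∅) = c k := fun k hk => if_pos hk
  let S : SplChain N Finset.univ :=
    { L := L
      Λ := fun k => if k ≤ L then c k else ∅
      nonempty_mem := fun k hk => by rw [hval k hk]; exact (hpart k hk).1
      subset_mem := fun k hk => by rw [hval k hk]; exact (hpart k hk).2.1
      cover := fun k hk => by rw [hval k hk]; exact (hpart k hk).2.2
      first := by rw [hval 0 (Nat.zero_le _), c0]
      last := by rw [hval L le_rfl]; exact hL
      refines := fun k hk => by
        rw [hval k hk.le, hval (k + 1) hk]; exact (c1 k (by omega)).2.1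
      strict := fun k hk => by
        rw [hval k hk.le, hval (k + 1) hk]
        intro h
        have := RR_card (hpart k hk.le) (c1 k (by omega)) (hmin k hk)
        rw [h] at this
        omega
      trailing := fun k hk => if_neg (by omega) }
  have hSL : S.L = L := rfl
  have hSΛ : ∀ k ≤ L, S.Λ k = c k := hval
  refine ⟨S, ?_, ?_⟩
  · intro lam hlam
    obtain ⟨k0, hk0, hm0, hcard⟩ := (S.mem_branches lam).1 hlam
    -- uniqueness
    have hstep : ∀ i j, i ≤ j → j ≤ L → ∀ B ∈ c j, ∃ C ∈ c i, B ⊆ C := by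
      intro i j hij
      induction j, hij using Nat.le_induction with
      | base => intro _ B hB; exact ⟨B, hB, subset_rfl⟩
      | succ j hij ih =>
        intro hj B hB
        obtain ⟨C, hC, hBC⟩ := (c1 j (by omega)).2.1 B hB
        obtain ⟨D, hD, hCD⟩ := ih (by omega) C hC
        exact ⟨D, hD, hBC.trans hCD⟩
    have hlt : ∀ i j, i < j → j ≤ L → lam ∈ c i → lam ∈ c j → False := by
      intro i j hij hj hi hj'
      obtain ⟨C, hC, hlC⟩ := hstep (i + 1) j hij hj lam hj'
      obtain ⟨D, hD, hCD⟩ := (c1 i (by omega)).2.1 C hC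
      have hlne : lam.Nonempty := (hpart i (by omega)).1 lam hi
      have e : lam = D := (hpart i (by omega)).disj hi hD hlne subset_rfl (hlC.trans hCD)
      have e2 : C = lam := Finset.Subset.antisymm (e ▸ hCD) hlC
      rw [e2] at hC
      have := (c1 i (by omega)).2.2 lam hi hC
      omega
    have huniq : ∀ i ≤ L, lam ∈ S.Λ i → i = k0 := by
      intro i hi h
      rw [hSL] at hk0
      rw [hSΛ i hi] at h
      rw [hSΛ k0 hk0.le] at hm0
      rcases lt_trichotomy i k0 with h1 | h1 | h1
      · exact (hlt i k0 h1 hk0.le h hm0).elim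
      · exact h1
      · exact (hlt k0 i h1 hi hm0 h).elim
    have hd : S.depth lam = k0 := by
      have : (Finset.range (S.L + 1)).filter (fun ℓ => lam ∈ S.Λ ℓ) = {k0} := by
        ext i
        rw [Finset.mem_filter, Finset.mem_range, Finset.mem_singleton]
        constructor
        · rintro ⟨a, b⟩; exact huniq i (by omega) b
        · rintro rfl; exact ⟨by omega, hm0⟩
      rw [SplChain.depth, this]
      simp
    intro k hk
    rw [hd]
    exact ⟨huniq k hk, fun h => h ▸ hm0⟩
  · funext k
    by_cases hk : k ≤ L
    · rw [S.path_le hk, hSΛ k hk]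
    · rw [S.path_ge (by omega), hbot k (by omega)]

lemma SplChain.weight (f : Finset (Fin N) → ℕ → ℂ) (S : SplChain N Finset.univ)
    (hS : S.Reduced) :
    ∏ lam ∈ S.branches, f lam (S.degree lam) =
      ∏ k ∈ Finset.range N, ww f (S.path k) (S.path (k + 1)) := by
  classical
  have h1 : ∏ k ∈ Finset.range N, ww f (S.path k) (S.path (k + 1)) =
      ∏ k ∈ Finset.range S.L, ww f (S.path k) (S.path (k + 1)) := by
    symm
    apply Finset.prod_subset
    · intro k hk
      rw [Finset.mem_range] at hk ⊢
      exact hk.trans_le (S.L_le hS)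
    · intro k _ hk
      rw [Finset.mem_range, not_lt] at hk
      rw [S.path_ge hk, ww]
      apply Finset.prod_eq_one
      intro lam hl
      rw [mem_bot] at hl
      simp [GG, hl]
  have h2 : S.branches =
      (Finset.range S.L).biUnion (fun k => (S.Λ k).filter (fun lam => 1 < lam.card)) := by
    ext lam
    rw [S.mem_branches]
    simp [Finset.mem_biUnion]
  have hdep : ∀ k < S.L, ∀ lam ∈ S.Λ k, 1 < lam.card → k = S.depth lam := by
    intro k hk lam hl hc
    exact (hS lam ((S.mem_branches lam).2 ⟨k, hk, hl, hc⟩) k hk.le).1 hl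
  rw [h1, h2, Finset.prod_biUnion]
  · apply Finset.prod_congr rfl
    intro k hk
    rw [Finset.mem_range] at hk
    rw [S.path_le hk.le, S.path_le hk, ww, Finset.prod_filter]
    apply Finset.prod_congr rfl
    intro lam hl
    rw [GG]
    split_ifs with hc
    · rw [SplChain.degree, ← hdep k hk lam hl hc]
      rfl
    · rfl
  · intro a ha b hb hab
    rw [Function.onFun, Finset.disjoint_left]
    intro lam h3 h4
    rw [Finset.mem_filter] at h3 h4
    have ha' : a < S.L := by simpa using ha
    have hb' : b < S.L := by simpa using hb
    exact hab ((hdep a ha' lam h3.1 h3.2).trans (hdep b hb' lam h4.1 h4.2).symm)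

lemma chain_sum (hN : 2 ≤ N) (f : Finset (Fin N) → ℕ → ℂ) (W : Finset (Fin N) → ℂ)
    (h1 : ∀ B, B.card ≤ 1 → W B = 1)
    (h2 : ∀ I, 1 < I.card → W I = ∑ P ∈ (parts I).erase {I}, f I P.card * ∏ B ∈ P, W B) :
    ∑ᶠ S ∈ {S : SplChain N (Finset.univ : Finset (Fin N)) | S.Reduced},
      ∏ lam ∈ S.branches, f lam (S.degree lam) = W Finset.univ := by
  have hne : (Finset.univ : Finset (Fin N)).Nonempty := ⟨⟨0, by omega⟩, Finset.mem_univ _⟩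
  have h := sum_paths f W h1 h2 N {Finset.univ} (triv_isPart _ hne) (by omega)
  rw [Finset.prod_singleton] at h
  rw [← h, ← finsum_mem_coe_finset]
  refine finsum_mem_eq_of_bijOn SplChain.path ⟨?_, ?_, ?_⟩ ?_
  · intro S hS
    exact S.path_mem hS
  · intro S hS T hT h
    exact S.path_inj T hS hT h
  · intro c hc
    obtain ⟨S, hS, h⟩ := SplChain.exists_path c hN hc
    exact ⟨S, hS, h⟩
  · intro S hS
    exact S.weight f hS

end chains
theorem statement_10 (p : ℕ) [Fact p.Prime] (N : ℕ) (hN : 2 ≤ N)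
    (μ : Measure ℚ_[p]) [SigmaFinite μ] [μ.IsAddHaarMeasure] (hμ : μ (Zball p) = 1)
    (s : Fin N → Fin N → ℂ) :
    (Integrable
        (fun x : Fin N → ℚ_[p] => ∏ q ∈ pairs N, (‖x q.1 - x q.2‖ : ℂ) ^ s q.1 q.2)
        (Measure.pi fun _ => μ.restrict (Zball p)) ↔ InOmega Finset.univ s) ∧
    (InOmega Finset.univ s →
      ZNs p μ (Zball p) N s =
        (p : ℂ) ^ (∑ q ∈ pairs N, s q.1 q.2) *
          ∑ᶠ S ∈ {S : SplChain N (Finset.univ : Finset (Fin N)) | S.Reduced},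
            ∏ lam ∈ S.branches,
              ((p - 1).descFactorial (S.degree lam - 1) : ℂ) /
                ((p : ℂ) ^ eexp lam s - 1)) := by

  have hp0 : (p : ℂ) ≠ 0 := by exact_mod_cast (Fact.out : p.Prime).ne_zero
  have hpI : pI (Finset.univ : Finset (Fin N)) = pairs N := by
    simp [pI]
  have hg : (fun x : Fin N → ℚ_[p] => ∏ q ∈ pairs N, (‖x q.1 - x q.2‖ : ℂ) ^ s q.1 q.2) =
      gI p s Finset.univ := by
    funext x
    simp only [gI, hpI]
  have := prob_zball p μ hμ
  refine ⟨⟨fun h => ?_, fun h => ?_⟩, fun h => ?_⟩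
  · rw [hg] at h
    exact omega_of_fin p s μ hμ h.2.ne
  · rw [hg]
    exact int_of_omega p s μ hμ h Finset.univ
  · have hc := chain_sum hN
      (fun lam d => ((p - 1).descFactorial (d - 1) : ℂ) / ((p : ℂ) ^ eexp lam s - 1))
      (zW p μ s) (fun B hB => zW_one p s μ B hB) (fun I hI => zW_rec p s μ hμ h I hI)
    rw [hc, ZNs, zW, ← mul_assoc, ← Complex.cpow_add _ _ hp0, hg]
    have : ∑ q ∈ pairs N, s q.1 q.2 + -sg s Finset.univ = 0 := by
      rw [sg, hpI]; ring
    rw [this, Complex.cpow_zero, one_mul]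

end LogCoulomb
end

section
/- For every prime p, every real β > 0, and every integer N ≥ 0, Z_N(ℙ¹(ℚ_p), β)/N! = Σ_{(N_0,…,N_p)} ∏_{k=0}^{p} (p/(p+1))^{N_k} · Z_{N_k}(pℤ_p, β)/N_k!, where the sum runs over all (p+1)-tuples of nonnegative integers (N_0,…,N_p) with N_0 + ⋯ + N_p = N. -/
open MeasureTheory
open scoped LinearAlgebra.Projectivization

namespace LogCoulomb

section generic
open Finset

variable {X : Type*} [MeasurableSpace X]

lemma W_congr {ι κ : Type*} [LinearOrder ι] [LinearOrder κ] [Fintype ι] [Fintype κ]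
    (e : ι ≃o κ) (τ : Measure X) [SigmaFinite τ] (g : X → X → ℂ) :
    (∫ x : ι → X, ∏ q ∈ univ.filter (fun q : ι × ι => q.1 < q.2), g (x q.1) (x q.2)
      ∂(Measure.pi fun _ => τ)) =
    ∫ x : κ → X, ∏ q ∈ univ.filter (fun q : κ × κ => q.1 < q.2), g (x q.1) (x q.2)
      ∂(Measure.pi fun _ => τ) := by
  have h := measurePreserving_piCongrLeft (fun _ : κ => τ) e.toEquiv
  rw [← h.integral_comp' ]
  congr 1
  ext x
  refine Finset.prod_equiv (e.toEquiv.prodCongr e.toEquiv) ?_ ?_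
  · intro q; simp
  · intro q _
    have h1 : ∀ i, (MeasurableEquiv.piCongrLeft (fun _ : κ => X) e.toEquiv) x (e i) = x i := by
      intro i
      exact Equiv.piCongrLeft_apply_apply (fun _ : κ => X) e.toEquiv x i
    simp [h1]

lemma W_split {ι κ : Type*} [LinearOrder ι] [Fintype ι] [Fintype κ] [DecidableEq κ]
    (f : ι → κ) (τ : Measure X) [SigmaFinite τ] (g : X → X → ℂ) :
    (∫ x : ι → X, ∏ q ∈ univ.filter (fun q : ι × ι => q.1 < q.2),
        (if f q.1 = f q.2 then g (x q.1) (x q.2) else 1)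
      ∂(Measure.pi fun _ => τ)) =
    ∏ k : κ, ∫ x : {i // f i = k} → X,
      ∏ q ∈ univ.filter (fun q : {i // f i = k} × {i // f i = k} => q.1 < q.2),
        g (x q.1) (x q.2) ∂(Measure.pi fun _ => τ) := by
  let E : (ι → X) ≃ᵐ ((k : κ) → {i // f i = k} → X) :=
    { toFun := fun x k i => x i
      invFun := fun y i => y (f i) ⟨i, rfl⟩
      left_inv := fun x => rfl
      right_inv := fun y => by
        ext k ⟨i, hi⟩
        subst hi
        rfl
      measurable_toFun := by
        refine measurable_pi_lambda _ fun k => measurable_pi_lambda _ fun i => ?_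
        exact measurable_pi_apply _
      measurable_invFun := by
        refine measurable_pi_lambda _ fun i => ?_
        exact (measurable_pi_apply (⟨i, rfl⟩ : {j // f j = f i})).comp
          (measurable_pi_apply (X := fun k => {j // f j = k} → X) (f i)) }
  have hE : MeasurePreserving E.symm
      (Measure.pi fun k : κ => Measure.pi fun _ : {i // f i = k} => τ)
      (Measure.pi fun _ : ι => τ) := by
    refine ⟨E.symm.measurable, ?_⟩
    symm
    refine Measure.pi_eq fun s hs => ?_
    rw [E.symm.map_apply]
    have : E.symm ⁻¹' (Set.univ.pi s) =
        Set.univ.pi fun k : κ => Set.univ.pi fun i : {i // f i = k} => s i := by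
      ext y
      simp only [Set.mem_preimage, Set.mem_univ_pi]
      constructor
      · rintro h k ⟨i, rfl⟩
        exact h i
      · intro h i
        exact h (f i) ⟨i, rfl⟩
    rw [this, Measure.pi_pi]
    simp only [Measure.pi_pi]
    exact Fintype.prod_fiberwise f (fun i => τ (s i))
  rw [← integral_fintype_prod_eq_prod, ← hE.integral_comp']
  congr 1
  ext y
  obtain ⟨x, rfl⟩ := E.surjective y
  rw [E.symm_apply_apply]
  rw [← Finset.prod_filter]
  have : ∀ k : κ, ∏ q ∈ univ.filter (fun q : {i // f i = k} × {i // f i = k} => q.1 < q.2),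
      g (E x k q.1) (E x k q.2) = 
      ∏ q ∈ (univ.filter (fun q : ι × ι => q.1 < q.2)).filter (fun q => f q.1 = f q.2) with f q.1 = k,
        g (x q.1) (x q.2) := by
    intro k
    refine Finset.prod_bij (fun q _ => (q.1.1, q.2.1)) ?_ ?_ ?_ ?_
    · rintro ⟨⟨a, ha⟩, ⟨b, hb⟩⟩ h
      simp at h ⊢
      exact ⟨⟨h, by rw [ha, hb]⟩, ha⟩
    · rintro ⟨⟨a, ha⟩, ⟨b, hb⟩⟩ h ⟨⟨a', ha'⟩, ⟨b', hb'⟩⟩ h' h''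
      simp at h'' ⊢
      exact h''
    · rintro ⟨a, b⟩ h
      simp at h
      exact ⟨(⟨a, h.2⟩, ⟨b, h.1.2 ▸ h.2⟩), by simpa using h.1.1, rfl⟩
    · intro q _; rfl
  simp_rw [this]
  rw [Finset.prod_fiberwise]

lemma count_sum (K N : ℕ) (W : ℕ → ℂ) :
    (∑ f : Fin N → Fin K, ∏ k, W (Fintype.card {i // f i = k})) / (N.factorial : ℂ) =
      ∑ n ∈ Finset.Nat.antidiagonalTuple K N, ∏ k, W (n k) / ((n k).factorial : ℂ) := by
  let L : MvPolynomial (Fin K) ℂ →ₗ[ℂ] ℂ :=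
    (MvPolynomial.basisMonomials (Fin K) ℂ).constr ℂ (fun n => ∏ k, W (n k))
  have hL : ∀ n : Fin K → ℕ, L (∏ k, MvPolynomial.X k ^ n k) = ∏ k, W (n k) := by
    intro n
    have : (∏ k, (MvPolynomial.X k : MvPolynomial (Fin K) ℂ) ^ n k) =
        MvPolynomial.basisMonomials (Fin K) ℂ (Finsupp.equivFunOnFinite.symm n) := by
      rw [MvPolynomial.coe_basisMonomials]
      show _ = MvPolynomial.monomial _ _
      rw [MvPolynomial.monomial_eq]
      simp [Finsupp.prod_fintype]
    rw [this, Module.Basis.constr_basis]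
    simp
  have h1 : (∑ k, (MvPolynomial.X k : MvPolynomial (Fin K) ℂ)) ^ N =
      ∑ f : Fin N → Fin K, ∏ k, MvPolynomial.X k ^ (Fintype.card {i // f i = k}) := by
    rw [Fintype.sum_pow]
    refine Finset.sum_congr rfl fun f _ => ?_
    rw [← Finset.prod_fiberwise (s := univ) (g := f)]
    refine Finset.prod_congr rfl fun k _ => ?_
    rw [Finset.prod_congr rfl (g := fun _ => MvPolynomial.X k)]
    · rw [Finset.prod_const, Fintype.card_subtype]
    · intro i hi
      simp at hi
      rw [hi]
  have h2 := Finset.sum_pow_eq_sum_piAntidiag univ (fun k => (MvPolynomial.X k : MvPolynomial (Fin K) ℂ)) N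
  rw [h1] at h2
  have h3 := congrArg L h2
  simp only [map_sum, hL, ← nsmul_eq_mul, map_nsmul] at h3
  rw [h3, piAntidiag_univ_fin_eq_antidiagonalTuple, Finset.sum_div]
  refine Finset.sum_congr rfl fun n hn => ?_
  rw [Finset.Nat.mem_antidiagonalTuple] at hn
  have h4 := Nat.multinomial_spec univ n
  rw [hn] at h4
  rw [← h4, Finset.prod_div_distrib, nsmul_eq_mul]
  push_cast
  have : (Nat.multinomial univ n : ℂ) ≠ 0 := by
    intro h
    have h' : Nat.multinomial univ n = 0 := by exact_mod_cast h
    rw [h', mul_zero] at h4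
    exact (Nat.factorial_ne_zero N) h4.symm
  have h5 : (∏ k, ((n k).factorial : ℂ)) ≠ 0 :=
    Finset.prod_ne_zero_iff.2 fun k _ => by exact_mod_cast Nat.factorial_ne_zero _
  field_simp

end generic
section generic2
open Finset

lemma pi_const_smul {X : Type*} [MeasurableSpace X] (n : ℕ) (m : Measure X) [SigmaFinite m]
    (c : NNReal) :
    (Measure.pi fun _ : Fin n => c • m) = (c ^ n) • (Measure.pi fun _ : Fin n => m) := by
  refine Measure.pi_eq fun s _ => ?_
  rw [Measure.smul_apply, Measure.pi_pi]
  simp only [Measure.smul_apply, ENNReal.smul_def, smul_eq_mul, Finset.prod_mul_distrib]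
  simp

lemma main_generic {X Y : Type*} [MeasurableSpace X] [MeasurableSpace Y] (K N : ℕ)
    (ν : Measure Y) [IsProbabilityMeasure ν] (τ : Measure X) [IsFiniteMeasure τ]
    (Ψ : Y → Fin K × X) (hΨ : Measurable Ψ)
    (hmap : ν.map Ψ = Measure.count.prod τ) (g : X → X → ℂ)
    (hg : Measurable (fun q : X × X => g q.1 q.2)) (D : Y → Y → ℂ)
    (hD : ∀ ξ η, D ξ η = if (Ψ ξ).1 = (Ψ η).1 then g (Ψ ξ).2 (Ψ η).2 else 1)
    (hD1 : ∀ ξ η, ‖D ξ η‖ ≤ 1) :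
    (∫ x : Fin N → Y, ∏ q ∈ pairs N, D (x q.1) (x q.2) ∂(Measure.pi fun _ => ν)) =
      ∑ f : Fin N → Fin K, ∏ k, ∫ x : Fin (Fintype.card {i // f i = k}) → X,
        ∏ q ∈ pairs (Fintype.card {i // f i = k}), g (x q.1) (x q.2)
          ∂(Measure.pi fun _ => τ) := by
  let G : (Fin N → Fin K × X) → ℂ := fun y => ∏ q ∈ pairs N,
    if (y q.1).1 = (y q.2).1 then g (y q.1).2 (y q.2).2 else 1
  have hG : Measurable G := by
    refine Finset.measurable_prod _ fun q _ => ?_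
    refine Measurable.ite ?_ ?_ measurable_const
    · exact measurableSet_eq_fun (measurable_fst.comp (measurable_pi_apply _))
        (measurable_fst.comp (measurable_pi_apply _))
    · exact hg.comp ((measurable_snd.comp (measurable_pi_apply _)).prodMk
        (measurable_snd.comp (measurable_pi_apply _)))
  let Φ : (Fin N → Y) → (Fin N → Fin K × X) := fun x i => Ψ (x i)
  have hΦ : Measurable Φ := measurable_pi_lambda _ fun i => hΨ.comp (measurable_pi_apply i)
  have hGΦ : ∀ x, (∏ q ∈ pairs N, D (x q.1) (x q.2)) = G (Φ x) := by
    intro x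
    refine Finset.prod_congr rfl fun q _ => ?_
    rw [hD]
  have hpi : (Measure.pi fun _ : Fin N => ν).map Φ =
      Measure.pi fun _ : Fin N => (Measure.count.prod τ : Measure (Fin K × X)) := by
    have : ∀ _ : Fin N, SigmaFinite (ν.map Ψ) := fun _ => by rw [hmap]; infer_instance
    have h := Measure.pi_map_pi (μ := fun _ : Fin N => ν) (f := fun _ => Ψ)
      (fun _ => hΨ.aemeasurable)
    rw [hmap] at h
    exact h
  have hint : Integrable G
      (Measure.pi fun _ : Fin N => (Measure.count.prod τ : Measure (Fin K × X))) := by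
    rw [← hpi, integrable_map_measure hG.aestronglyMeasurable hΦ.aemeasurable]
    refine Integrable.of_bound (hG.comp hΦ).aestronglyMeasurable 1 (.of_forall fun x => ?_)
    simp only [Function.comp]
    rw [← hGΦ, norm_prod]
    exact Finset.prod_le_one (fun _ _ => norm_nonneg _) fun q _ => hD1 _ _
  simp_rw [hGΦ]
  rw [← integral_map hΦ.aemeasurable hG.aestronglyMeasurable, hpi]
  have hmp := (measurePreserving_arrowProdEquivProdArrow (Fin K) X (Fin N)
    (fun _ => Measure.count) (fun _ => τ)).symm
  rw [← hmp.integral_comp']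
  have hint2 := (hmp.integrable_comp_emb (MeasurableEquiv.measurableEmbedding _)).2 hint
  refine (integral_prod _ hint2).trans ?_
  have hc : (Measure.pi fun _ : Fin N => (Measure.count : Measure (Fin K))) = Measure.count := by
    refine Measure.pi_eq fun s _ => ?_
    classical
    have hs : ∀ i, (s i).Finite := fun i => Set.toFinite _
    simp only [Measure.count_apply_finite _ (Set.toFinite _)]
    rw [← Nat.cast_prod, ← Fintype.card_piFinset]
    congr 2
    ext f
    simp
  rw [hc, integral_count]
  refine Finset.sum_congr rfl fun f _ => ?_
  have h1 := W_split f τ g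
  rw [show (∏ k, ∫ x : Fin (Fintype.card {i // f i = k}) → X,
        ∏ q ∈ pairs (Fintype.card {i // f i = k}), g (x q.1) (x q.2)
          ∂(Measure.pi fun _ => τ)) = ∏ k, ∫ x : {i // f i = k} → X,
      ∏ q ∈ univ.filter (fun q : {i // f i = k} × {i // f i = k} => q.1 < q.2),
        g (x q.1) (x q.2) ∂(Measure.pi fun _ => τ) from ?_]
  · rw [← h1]
    rfl
  · refine Finset.prod_congr rfl fun k _ => ?_
    exact W_congr (Fintype.orderIsoFinOfCardEq _ rfl) τ g

end generic2
section padic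
open Finset

variable {p : ℕ} [Fact p.Prime]

lemma mk_scale (v : Fin 2 → ℚ_[p]) (hv : v ≠ 0) :
    ∃ a : ℚ_[p], a ≠ 0 ∧ (Projectivization.mk ℚ_[p] v hv).rep = a • v := by
  obtain ⟨a, ha⟩ := Projectivization.exists_smul_eq_mk_rep ℚ_[p] v hv
  exact ⟨a, a.ne_zero, ha.symm⟩

lemma mobius_mk {A B : Matrix (Fin 2) (Fin 2) ℚ_[p]} (h : B * A = 1)
    (v : Fin 2 → ℚ_[p]) (hv : v ≠ 0) :
    ∃ h' : A.mulVec v ≠ 0, mobius p A (Projectivization.mk ℚ_[p] v hv) =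
      Projectivization.mk ℚ_[p] (A.mulVec v) h' := by
  have key : ∀ w : Fin 2 → ℚ_[p], w ≠ 0 → A.mulVec w ≠ 0 := by
    intro w hw h0
    apply hw
    have : (B * A).mulVec w = 0 := by rw [← Matrix.mulVec_mulVec, h0, Matrix.mulVec_zero]
    rwa [h, Matrix.one_mulVec] at this
  refine ⟨key v hv, ?_⟩
  obtain ⟨a, ha, hr⟩ := mk_scale v hv
  unfold mobius
  rw [dif_pos (key _ (Projectivization.rep_nonzero _))]
  rw [Projectivization.mk_eq_mk_iff']
  exact ⟨a, by rw [hr, Matrix.mulVec_smul]⟩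

lemma isOpen_P1 {S : Set (P1 p)} :
    IsOpen S ↔ IsOpen {v : {v : Fin 2 → ℚ_[p] // v ≠ 0} | Projectivization.mk ℚ_[p] v.1 v.2 ∈ S} :=
  Iff.rfl

lemma mobius_inv {A B : Matrix (Fin 2) (Fin 2) ℚ_[p]} (h : B * A = 1) (h' : A * B = 1) (ξ : P1 p) :
    mobius p B (mobius p A ξ) = ξ := by
  induction ξ using Projectivization.ind with
  | h v hv =>
    obtain ⟨h1, h2⟩ := mobius_mk h v hv
    obtain ⟨h3, h4⟩ := mobius_mk h' _ h1
    rw [h2, h4]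
    congr 1
    rw [Matrix.mulVec_mulVec, h, Matrix.one_mulVec]

lemma mobius_continuous {A B : Matrix (Fin 2) (Fin 2) ℚ_[p]} (h : B * A = 1) :
    Continuous (mobius p A) := by
  refine ⟨fun S hS => ?_⟩
  rw [isOpen_P1] at hS ⊢
  have hc : Continuous (fun v : {v : Fin 2 → ℚ_[p] // v ≠ 0} =>
      (⟨A.mulVec v.1, (mobius_mk h v.1 v.2).choose⟩ : {v : Fin 2 → ℚ_[p] // v ≠ 0})) := by
    refine Continuous.subtype_mk ?_ _
    exact Continuous.matrix_mulVec continuous_const continuous_subtype_val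
  have := hS.preimage hc
  convert this using 1
  ext v
  simp only [Set.mem_ofPred_eq, Set.mem_preimage]
  obtain ⟨h1, h2⟩ := mobius_mk h v.1 v.2
  exact iff_of_eq (congrArg (· ∈ S) h2)

lemma nu_preimage {ν : Measure (P1 p)} (hν : IsGLInvariant p ν)
    {A B : Matrix (Fin 2) (Fin 2) ℚ_[p]} (h : B * A = 1) (h' : A * B = 1)
    (hB : ∀ i j, ‖B i j‖ ≤ 1) (hd : ‖B.det‖ = 1) {M : Set (P1 p)} (hM : MeasurableSet M) :
    ν (mobius p A ⁻¹' M) = ν M := by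
  rw [← hν B hB hd M hM]
  congr 1
  ext ξ
  constructor
  · intro hx
    exact ⟨_, hx, mobius_inv h h' ξ⟩
  · rintro ⟨η, hη, rfl⟩
    rw [Set.mem_preimage, mobius_inv h' h]
    exact hη

variable (p) in
/-- The base ball. -/
def B0 : Set (P1 p) := {ξ | ‖ξ.rep 0‖ < ‖ξ.rep 1‖}

lemma mk_mem_B0 (v : Fin 2 → ℚ_[p]) (hv : v ≠ 0) :
    Projectivization.mk ℚ_[p] v hv ∈ B0 p ↔ ‖v 0‖ < ‖v 1‖ := by
  obtain ⟨a, ha, hr⟩ := mk_scale v hv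
  simp only [B0, Set.mem_ofPred_eq, hr, Pi.smul_apply, smul_eq_mul, norm_mul]
  exact mul_lt_mul_iff_right₀ (norm_pos_iff.2 ha)

variable (p) in
open Classical in
/-- The affine coordinate on the base ball. -/
noncomputable def psi (ξ : P1 p) : ℚ_[p] := if ξ ∈ B0 p then ξ.rep 0 / ξ.rep 1 else 0

lemma psi_mk (v : Fin 2 → ℚ_[p]) (hv : v ≠ 0) (h : ‖v 0‖ < ‖v 1‖) :
    psi p (Projectivization.mk ℚ_[p] v hv) = v 0 / v 1 := by
  rw [psi, if_pos ((mk_mem_B0 v hv).2 h)]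
  obtain ⟨a, ha, hr⟩ := mk_scale v hv
  rw [hr]
  simp only [Pi.smul_apply, smul_eq_mul]
  rw [mul_div_mul_left _ _ ha]

lemma cont_coord (i : Fin 2) :
    Continuous (fun v : {v : Fin 2 → ℚ_[p] // v ≠ 0} => v.1 i) :=
  (continuous_apply i).comp continuous_subtype_val

lemma B0_open : IsOpen (B0 p) := by
  rw [isOpen_P1]
  simp only [mk_mem_B0]
  exact isOpen_lt (cont_coord 0).norm (cont_coord 1).norm

lemma psi_open {U : Set ℚ_[p]} (hU : IsOpen U) : IsOpen (B0 p ∩ psi p ⁻¹' U) := by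
  rw [isOpen_P1]
  have hc : ContinuousOn (fun v : {v : Fin 2 → ℚ_[p] // v ≠ 0} => v.1 0 / v.1 1)
      {v | ‖v.1 0‖ < ‖v.1 1‖} := by
    refine ContinuousOn.div (cont_coord 0).continuousOn (cont_coord 1).continuousOn ?_
    intro v hv h0
    simp only [Set.mem_ofPred_eq, h0, norm_zero] at hv
    exact absurd hv (not_lt.2 (norm_nonneg _))
  have ho : IsOpen {v : {v : Fin 2 → ℚ_[p] // v ≠ 0} | ‖v.1 0‖ < ‖v.1 1‖} :=
    isOpen_lt (cont_coord 0).norm (cont_coord 1).norm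
  convert hc.isOpen_inter_preimage ho hU using 1
  ext v
  simp only [Set.mem_ofPred_eq, Set.mem_inter_iff, mk_mem_B0, Set.mem_preimage]
  refine and_congr_right fun h => ?_
  rw [psi_mk _ _ h]

lemma psi_measurable : Measurable (psi p) := by
  classical
  refine measurable_of_isOpen fun U hU => ?_
  have : psi p ⁻¹' U = (B0 p ∩ psi p ⁻¹' U) ∪ ((B0 p)ᶜ ∩ {_ξ | (0 : ℚ_[p]) ∈ U}) := by
    ext ξ
    by_cases h : ξ ∈ B0 p
    · simp [h]
    · simp [h, psi]
  rw [this]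
  exact (psi_open hU).measurableSet.union (B0_open.measurableSet.compl.inter (MeasurableSet.const _))

/-- translation matrix -/
noncomputable def Tm (a : ℚ_[p]) : Matrix (Fin 2) (Fin 2) ℚ_[p] := !![1, a; 0, 1]

variable (p) in
/-- swap matrix -/
noncomputable def Sm : Matrix (Fin 2) (Fin 2) ℚ_[p] := !![0, 1; 1, 0]

lemma Tm_mul (a b : ℚ_[p]) (h : a + b = 0) : Tm a * Tm b = 1 := by
  ext i j
  fin_cases i <;> fin_cases j <;> simp [Tm, add_comm, h]

lemma Sm_mul : Sm p * Sm p = 1 := by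
  ext i j
  fin_cases i <;> fin_cases j <;> simp [Sm]

lemma Tm_int (a : ℚ_[p]) (ha : ‖a‖ ≤ 1) (i j) : ‖Tm a i j‖ ≤ 1 := by
  fin_cases i <;> fin_cases j <;> simp [Tm, ha]

lemma Sm_int (i j) : ‖Sm p i j‖ ≤ 1 := by
  fin_cases i <;> fin_cases j <;> simp [Sm]

lemma Tm_det (a : ℚ_[p]) : ‖(Tm a).det‖ = 1 := by simp [Tm, Matrix.det_fin_two]
lemma Sm_det : ‖(Sm p).det‖ = 1 := by simp [Sm, Matrix.det_fin_two]

lemma Tm_vec (a : ℚ_[p]) (v : Fin 2 → ℚ_[p]) : (Tm a).mulVec v = ![v 0 + a * v 1, v 1] := by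
  ext i
  fin_cases i <;> simp [Tm, Matrix.mulVec, dotProduct, Fin.sum_univ_two]
lemma Sm_vec (v : Fin 2 → ℚ_[p]) : (Sm p).mulVec v = ![v 1, v 0] := by
  ext i
  fin_cases i <;> simp [Sm, Matrix.mulVec, dotProduct, Fin.sum_univ_two]

variable (p) in
/-- The inverse chart matrices. -/
noncomputable def Mi (k : Fin (p + 1)) : Matrix (Fin 2) (Fin 2) ℚ_[p] :=
  if (k : ℕ) < p then Tm (-(k : ℕ) : ℚ_[p]) else Sm p

variable (p) in
/-- The chart matrices. -/
noncomputable def Mc (k : Fin (p + 1)) : Matrix (Fin 2) (Fin 2) ℚ_[p] :=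
  if (k : ℕ) < p then Tm ((k : ℕ) : ℚ_[p]) else Sm p

lemma Mi_Mc (k) : Mi p k * Mc p k = 1 := by
  unfold Mi Mc; split_ifs
  · exact Tm_mul _ _ (by ring)
  · exact Sm_mul

lemma Mc_Mi (k) : Mc p k * Mi p k = 1 := by
  unfold Mi Mc; split_ifs
  · exact Tm_mul _ _ (by ring)
  · exact Sm_mul

lemma norm_nat_le (k : ℕ) : ‖(k : ℚ_[p])‖ ≤ 1 := by
  simpa using Padic.norm_int_le_one (p := p) (k : ℤ)

lemma Mc_int (k i j) : ‖Mc p k i j‖ ≤ 1 := by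
  unfold Mc; split_ifs
  · exact Tm_int _ (norm_nat_le _) _ _
  · exact Sm_int _ _

lemma Mc_det (k) : ‖(Mc p k).det‖ = 1 := by
  unfold Mc; split_ifs
  · exact Tm_det _
  · exact Sm_det

lemma existsUnique_residue (x : ℚ_[p]) (hx : ‖x‖ ≤ 1) : ∃! k : ℕ, k < p ∧ ‖x - k‖ < 1 := by
  have h := PadicInt.existsUnique_mem_range (p := p) ⟨x, hx⟩
  simp only [PadicInt.mem_nonunits, IsLocalRing.mem_maximalIdeal] at h
  exact h

lemma lt_norm_add {a b : ℚ_[p]} {r : ℝ} (ha : ‖a‖ < r) (hb : ‖b‖ < r) : ‖a + b‖ < r :=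
  lt_of_le_of_lt (Padic.nonarchimedean a b) (max_lt ha hb)

lemma existsUnique_chart (ξ : P1 p) : ∃! k : Fin (p + 1), mobius p (Mi p k) ξ ∈ B0 p := by
  induction ξ using Projectivization.ind with
  | h v hv =>
    have key : ∀ k : Fin (p + 1), mobius p (Mi p k) (Projectivization.mk ℚ_[p] v hv) ∈ B0 p ↔
        (if (k : ℕ) < p then ‖v 0 - (k : ℕ) * v 1‖ < ‖v 1‖ else ‖v 1‖ < ‖v 0‖) := by
      intro k
      obtain ⟨h1, h2⟩ := mobius_mk (Mc_Mi k) v hv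
      rw [h2, mk_mem_B0]
      unfold Mi
      split_ifs
      · rw [Tm_vec]; simp [sub_eq_add_neg]
      · rw [Sm_vec]; simp
    simp only [key]
    rcases lt_or_ge ‖v 1‖ ‖v 0‖ with h | h
    · refine ⟨Fin.last p, by simpa using h, ?_⟩
      intro k hk
      split_ifs at hk with hkp
      · exfalso
        have h1 : ‖(k : ℕ) * v 1‖ ≤ ‖v 1‖ := by
          rw [norm_mul]
          exact mul_le_of_le_one_left (norm_nonneg _) (norm_nat_le _)
        have h2 : ‖v 0‖ < ‖v 0‖ := by
          have := lt_norm_add (hk.trans h) (h1.trans_lt h)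
          simpa using this
        exact lt_irrefl _ h2
      · ext
        have := k.2
        simp
        omega
    · have hv1 : v 1 ≠ 0 := by
        intro h0
        apply hv
        rw [h0, norm_zero] at h
        have := norm_le_zero_iff.1 h
        ext i
        fin_cases i <;> simp [this, h0]
      have hn : 0 < ‖v 1‖ := norm_pos_iff.2 hv1
      have hx : ‖v 0 / v 1‖ ≤ 1 := by
        rw [norm_div]; exact div_le_one_of_le₀ h hn.le
      have heq : ∀ k : ℕ, ‖v 0 / v 1 - k‖ < 1 ↔ ‖v 0 - k * v 1‖ < ‖v 1‖ := by
        intro k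
        have : v 0 / v 1 - k = (v 0 - k * v 1) / v 1 := by field_simp
        rw [this, norm_div, div_lt_one hn]
      obtain ⟨k, ⟨hk, hk'⟩, hu⟩ := existsUnique_residue _ hx
      refine ⟨⟨k, by omega⟩, ?_, ?_⟩
      · simp only [hk, if_true]
        exact (heq k).1 hk'
      · intro l hl
        split_ifs at hl with hlp
        · ext
          exact hu l ⟨hlp, (heq l).2 hl⟩
        · exact absurd hl (not_lt.2 h)

/-- index of chart -/
noncomputable def idx (ξ : P1 p) : Fin (p + 1) := (existsUnique_chart ξ).choose

lemma idx_eq_iff (ξ : P1 p) (k) : idx ξ = k ↔ mobius p (Mi p k) ξ ∈ B0 p := by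
  have h := (existsUnique_chart ξ).choose_spec
  constructor
  · rintro rfl
    exact h.1
  · intro hk
    exact (h.2 k hk).symm

/-- chart coordinates -/
noncomputable def Psi (ξ : P1 p) : Fin (p + 1) × ℚ_[p] :=
  (idx ξ, psi p (mobius p (Mi p (idx ξ)) ξ))

lemma idx_measurable : Measurable (idx (p := p)) := by
  refine measurable_to_countable' fun k => ?_
  have : idx ⁻¹' {k} = mobius p (Mi p k) ⁻¹' (B0 p) := by
    ext ξ
    simp [idx_eq_iff]
  rw [this]
  exact (mobius_continuous (Mc_Mi k)).measurable B0_open.measurableSet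

lemma psi_comp_measurable :
    Measurable (fun ξ : P1 p => psi p (mobius p (Mi p (idx ξ)) ξ)) := by
  have h : ∀ k, Measurable (fun ξ : P1 p => psi p (mobius p (Mi p k) ξ)) := fun k =>
    psi_measurable.comp (mobius_continuous (Mc_Mi k)).measurable
  intro s hs
  have h2 : (fun ξ : P1 p => psi p (mobius p (Mi p (idx ξ)) ξ)) ⁻¹' s =
      ⋃ k, (idx ⁻¹' {k} ∩ (fun ξ : P1 p => psi p (mobius p (Mi p k) ξ)) ⁻¹' s) := by
    ext ξ
    simp
  rw [h2]
  exact MeasurableSet.iUnion fun k => (idx_measurable (measurableSet_singleton k)).inter (h k hs)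

lemma Psi_measurable : Measurable (Psi (p := p)) :=
  Measurable.prodMk idx_measurable psi_comp_measurable

end padic
section padic2
open Finset

variable {p : ℕ} [Fact p.Prime]

lemma pdelta_mk (v w : Fin 2 → ℚ_[p]) (hv : v ≠ 0) (hw : w ≠ 0) :
    pdelta p (Projectivization.mk ℚ_[p] v hv) (Projectivization.mk ℚ_[p] w hw) = sdelta p v w := by
  obtain ⟨a, ha, hr⟩ := mk_scale v hv
  obtain ⟨b, hb, hs⟩ := mk_scale w hw
  unfold pdelta sdelta
  rw [hr, hs]
  simp only [Pi.smul_apply, smul_eq_mul, norm_mul]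
  rw [← mul_max_of_nonneg _ _ (norm_nonneg a), ← mul_max_of_nonneg _ _ (norm_nonneg b)]
  have h1 : a * v 0 * (b * w 1) - a * v 1 * (b * w 0) = (a * b) * (v 0 * w 1 - v 1 * w 0) := by ring
  rw [h1, norm_mul, norm_mul]
  have h2 : ‖a‖ * max ‖v 0‖ ‖v 1‖ * (‖b‖ * max ‖w 0‖ ‖w 1‖) =
    (‖a‖ * ‖b‖) * (max ‖v 0‖ ‖v 1‖ * max ‖w 0‖ ‖w 1‖) := by ring
  rw [h2, mul_div_mul_left]
  exact mul_ne_zero (norm_ne_zero_iff.2 ha) (norm_ne_zero_iff.2 hb)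

lemma chart_rep (ξ : P1 p) : ‖(Psi ξ).2‖ < 1 ∧ ∃ h,
    ξ = Projectivization.mk ℚ_[p] ((Mc p (Psi ξ).1).mulVec ![(Psi ξ).2, 1]) h := by
  have hB := (idx_eq_iff ξ _).1 rfl
  have hξ : mobius p (Mc p (idx ξ)) (mobius p (Mi p (idx ξ)) ξ) = ξ :=
    mobius_inv (Mc_Mi _) (Mi_Mc _) ξ
  show ‖psi p (mobius p (Mi p (idx ξ)) ξ)‖ < 1 ∧ ∃ h,
    ξ = Projectivization.mk ℚ_[p] ((Mc p (idx ξ)).mulVec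
      ![psi p (mobius p (Mi p (idx ξ)) ξ), 1]) h
  generalize mobius p (Mi p (idx ξ)) ξ = η at *
  generalize idx ξ = k at *
  subst hξ
  induction η using Projectivization.ind with
  | h v hv =>
    rw [mk_mem_B0] at hB
    have hv1 : 0 < ‖v 1‖ := lt_of_le_of_lt (norm_nonneg _) hB
    have hv1' : v 1 ≠ 0 := norm_pos_iff.1 hv1
    rw [psi_mk v hv hB]
    refine ⟨by rwa [norm_div, div_lt_one hv1], ?_⟩
    have h0 : (![v 0 / v 1, 1] : Fin 2 → ℚ_[p]) ≠ 0 := by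
      intro h
      have := congrFun h 1
      simp at this
    have he : Projectivization.mk ℚ_[p] v hv = Projectivization.mk ℚ_[p] ![v 0 / v 1, 1] h0 := by
      rw [Projectivization.mk_eq_mk_iff']
      refine ⟨v 1, ?_⟩
      ext i
      fin_cases i
      · simp; field_simp
      · simp
    rw [he]
    obtain ⟨h1, h2⟩ := mobius_mk (Mi_Mc k) _ h0
    exact ⟨h1, h2⟩

lemma norm_add_of_lt {a b : ℚ_[p]} (h : ‖a‖ < ‖b‖) : ‖a + b‖ = ‖b‖ := by
  rw [Padic.add_eq_max_of_ne h.ne, max_eq_right h.le]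

lemma nat_sub_norm {k l : ℕ} (hk : k < p) (hl : l < p) (h : k ≠ l) :
    ‖(k : ℚ_[p]) - l‖ = 1 := by
  refine le_antisymm ?_ (not_lt.1 fun hlt => ?_)
  · have := Padic.norm_int_le_one (p := p) ((k : ℤ) - l)
    push_cast at this
    exact this
  · obtain ⟨m, _, hu⟩ := existsUnique_residue (k : ℚ_[p]) (norm_nat_le _)
    have h1 := hu k ⟨hk, by simp⟩
    have h2 := hu l ⟨hl, hlt⟩
    exact h (h1.trans h2.symm)

lemma sdelta_chart (k l : Fin (p + 1)) (x y : ℚ_[p]) (hx : ‖x‖ < 1) (hy : ‖y‖ < 1) :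
    sdelta p ((Mc p k).mulVec ![x, 1]) ((Mc p l).mulVec ![y, 1]) =
      if k = l then ‖x - y‖ else 1 := by
  have hm1 : ∀ (z : ℚ_[p]) (m : ℕ), ‖z‖ < 1 → max ‖z + m‖ 1 = 1 := by
    intro z m hz
    refine max_eq_right ((Padic.nonarchimedean _ _).trans (max_le hz.le (norm_nat_le _)))
  have hmix : ∀ (a b : ℚ_[p]) (m : ℕ), ‖a‖ < 1 → ‖b‖ < 1 → ‖1 - (a + m) * b‖ = 1 := by
    intro a b m ha hb
    have h1 : ‖-((a + m) * b)‖ < ‖(1 : ℚ_[p])‖ := by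
      rw [norm_neg, norm_mul, norm_one]
      have : ‖a + m‖ ≤ 1 := (Padic.nonarchimedean _ _).trans (max_le ha.le (norm_nat_le _))
      exact lt_of_le_of_lt (mul_le_of_le_one_left (norm_nonneg _) this) hb
    have := norm_add_of_lt h1
    rw [norm_one] at this
    rw [← this]
    congr 1
    ring
  unfold sdelta Mc
  by_cases h1 : (k : ℕ) < p <;> by_cases h2 : (l : ℕ) < p <;> by_cases h3 : k = l <;>
    simp only [h1, h2, h3, if_true, if_false]
  · subst h3
    simp only [Tm_vec, Matrix.cons_val_zero, Matrix.cons_val_one, mul_one, one_mul, norm_one,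
      hm1 _ _ hx, hm1 _ _ hy, div_one, add_sub_add_right_eq_sub]
  · simp only [Tm_vec, Matrix.cons_val_zero, Matrix.cons_val_one, mul_one, one_mul, norm_one,
      hm1 _ _ hx, hm1 _ _ hy, div_one]
    have hne : (k : ℕ) ≠ l := fun h => h3 (Fin.ext h)
    have hn := nat_sub_norm h1 h2 hne
    have h4 : ‖x - y‖ < ‖((k : ℕ) : ℚ_[p]) - (l : ℕ)‖ := by
      rw [hn, sub_eq_add_neg]
      exact lt_norm_add hx (by rwa [norm_neg])
    have h5 := norm_add_of_lt h4
    rw [hn] at h5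
    rw [← h5]
    congr 1
    ring
  · subst h3; exact absurd h1 h2
  · simp only [Tm_vec, Sm_vec, Matrix.cons_val_zero, Matrix.cons_val_one, mul_one, one_mul, norm_one,
      hm1 _ _ hx, max_eq_left hy.le, div_one]
    rw [norm_sub_rev, hmix _ _ _ hx hy]
  · subst h3; exact absurd h2 h1
  · simp only [Tm_vec, Sm_vec, Matrix.cons_val_zero, Matrix.cons_val_one, mul_one, one_mul, norm_one,
      hm1 _ _ hy, max_eq_left hx.le, div_one]
    rw [mul_comm, hmix _ _ _ hy hx]
  · simp only [Sm_vec, Matrix.cons_val_zero, Matrix.cons_val_one, mul_one, one_mul, norm_one,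
      max_eq_left hx.le, max_eq_left hy.le, div_one]
    rw [norm_sub_rev]
  · exfalso
    apply h3
    ext
    have := k.2
    have := l.2
    omega

lemma pdelta_eq (ξ η : P1 p) : pdelta p ξ η =
    if (Psi ξ).1 = (Psi η).1 then ‖(Psi ξ).2 - (Psi η).2‖ else 1 := by
  obtain ⟨hx, h1, h2⟩ := chart_rep ξ
  obtain ⟨hy, h3, h4⟩ := chart_rep η
  rw [← sdelta_chart _ _ _ _ hx hy, ← pdelta_mk _ _ h1 h3, ← h2, ← h4]

lemma pdelta_le (ξ η : P1 p) : pdelta p ξ η ≤ 1 := by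
  rw [pdelta_eq]
  split_ifs
  · rw [sub_eq_add_neg]
    exact (lt_norm_add (chart_rep ξ).1 (by rw [norm_neg]; exact (chart_rep η).1)).le
  · exact le_rfl

lemma pdelta_nonneg (ξ η : P1 p) : 0 ≤ pdelta p ξ η := by
  rw [pdelta_eq]
  split_ifs
  · exact norm_nonneg _
  · exact zero_le_one

variable (p) in
/-- the local measure -/
noncomputable def lam (ν : Measure (P1 p)) : Measure ℚ_[p] := (ν.restrict (B0 p)).map (psi p)

lemma lam_apply (ν : Measure (P1 p)) {t : Set ℚ_[p]} (ht : MeasurableSet t) :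
    lam p ν t = ν (psi p ⁻¹' t ∩ B0 p) := by
  rw [lam, Measure.map_apply psi_measurable ht, Measure.restrict_apply (psi_measurable ht)]

instance (ν : Measure (P1 p)) [IsProbabilityMeasure ν] : IsFiniteMeasure (lam p ν) := by
  unfold lam; infer_instance

lemma map_Psi (ν : Measure (P1 p)) [IsProbabilityMeasure ν] (hν : IsGLInvariant p ν) :
    ν.map Psi = Measure.count.prod (lam p ν) := by
  symm
  refine Measure.prod_eq fun s t hs ht => ?_
  rw [Measure.map_apply Psi_measurable (hs.prod ht)]
  classical
  have h1 : Psi ⁻¹' (s ×ˢ t) =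
      ⋃ k ∈ s.toFinset, mobius p (Mi p k) ⁻¹' (psi p ⁻¹' t ∩ B0 p) := by
    ext ξ
    simp only [Set.mem_preimage, Set.mem_prod, Set.mem_iUnion, Set.mem_toFinset, Set.mem_inter_iff,
      ← idx_eq_iff]
    constructor
    · rintro ⟨ha, hb⟩
      exact ⟨idx ξ, ha, hb, rfl⟩
    · rintro ⟨k, ha, hb, rfl⟩
      exact ⟨ha, hb⟩
  have hm : MeasurableSet (psi p ⁻¹' t ∩ B0 p) := (psi_measurable ht).inter B0_open.measurableSet
  rw [h1, measure_biUnion_finset]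
  · rw [Finset.sum_congr rfl fun k _ =>
      nu_preimage hν (Mc_Mi k) (Mi_Mc k) (Mc_int k) (Mc_det k) hm]
    rw [Finset.sum_const, ← lam_apply ν ht, Measure.count_apply_finite s (Set.toFinite s),
      nsmul_eq_mul]
    simp
  · intro k _ l _ hkl
    refine Set.disjoint_left.2 fun ξ h2 h3 => hkl ?_
    exact ((idx_eq_iff ξ k).2 h2.2).symm.trans ((idx_eq_iff ξ l).2 h3.2)
  · intro k _
    exact (mobius_continuous (Mc_Mi k)).measurable hm

lemma lam_univ (ν : Measure (P1 p)) [IsProbabilityMeasure ν] (hν : IsGLInvariant p ν) :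
    ((p + 1 : ℕ) : ENNReal) * lam p ν Set.univ = 1 := by
  have h := congrArg (fun m => m Set.univ) (map_Psi ν hν)
  simp only [Measure.map_apply Psi_measurable MeasurableSet.univ, Set.preimage_univ, measure_univ] at h
  rw [h, ← Set.univ_prod_univ, Measure.prod_prod]
  simp

lemma lam_translate (ν : Measure (P1 p)) (hν : IsGLInvariant p ν) (a : ℚ_[p])
    (ha : ‖a‖ < 1) {t : Set ℚ_[p]} (ht : MeasurableSet t) :
    lam p ν ((fun x => x + a) ⁻¹' t) = lam p ν t := by
  have hT1 : Tm (-a) * Tm a = 1 := Tm_mul _ _ (by ring)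
  have hT2 : Tm a * Tm (-a) = 1 := Tm_mul _ _ (by ring)
  rw [lam_apply ν ht, lam_apply ν ((measurable_add_const a) ht),
    ← nu_preimage hν hT1 hT2 (Tm_int (-a) (by rw [norm_neg]; exact ha.le)) (Tm_det _)
      ((psi_measurable ht).inter B0_open.measurableSet)]
  congr 1
  ext ξ
  induction ξ using Projectivization.ind with
  | h v hv =>
    obtain ⟨h1, h2⟩ := mobius_mk hT1 v hv
    simp only [Set.mem_preimage, Set.mem_inter_iff, h2]
    rw [mk_mem_B0, mk_mem_B0]
    have hiff : ‖(Tm a).mulVec v 0‖ < ‖(Tm a).mulVec v 1‖ ↔ ‖v 0‖ < ‖v 1‖ := by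
      simp only [Tm_vec, Matrix.cons_val_zero, Matrix.cons_val_one]
      have hs : ∀ b : ℚ_[p], ‖b‖ < ‖v 1‖ → ‖a * v 1‖ < ‖v 1‖ := by
        intro b hb
        have : 0 < ‖v 1‖ := lt_of_le_of_lt (norm_nonneg _) hb
        rw [norm_mul]
        exact mul_lt_of_lt_one_left this ha
      constructor
      · intro h
        have := lt_norm_add h (b := -(a * v 1)) (by rw [norm_neg]; exact hs _ h)
        simpa using this
      · intro h
        exact lt_norm_add h (hs _ h)
    rw [hiff]
    refine and_congr_left fun h => ?_
    rw [psi_mk _ _ (hiff.2 h), psi_mk _ _ h]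
    have hv1 : v 1 ≠ 0 := norm_pos_iff.1 (lt_of_le_of_lt (norm_nonneg _) h)
    have : (Tm a).mulVec v 0 / (Tm a).mulVec v 1 = v 0 / v 1 + a := by
      simp only [Tm_vec, Matrix.cons_val_zero, Matrix.cons_val_one]
      field_simp
    rw [this]

lemma Pball_open : IsOpen (Pball p) := isOpen_lt continuous_norm continuous_const

lemma lam_compl (ν : Measure (P1 p)) : lam p ν (Pball p)ᶜ = 0 := by
  rw [lam_apply ν Pball_open.measurableSet.compl]
  convert measure_empty (μ := ν)
  ext ξ
  induction ξ using Projectivization.ind with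
  | h v hv =>
    simp only [Set.mem_inter_iff, Set.mem_preimage, Set.mem_compl_iff, Set.mem_empty_iff_false,
      iff_false, not_and]
    intro h1 h2
    rw [mk_mem_B0] at h2
    apply h1
    rw [psi_mk _ _ h2]
    have hv1 : 0 < ‖v 1‖ := lt_of_le_of_lt (norm_nonneg _) h2
    show ‖_‖ < 1
    rwa [norm_div, div_lt_one hv1]

lemma mu_translate (μ : Measure ℚ_[p]) [μ.IsAddHaarMeasure] (x : ℚ_[p]) (hx : ‖x‖ < 1)
    {t : Set ℚ_[p]} (ht : MeasurableSet t) :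
    μ.restrict (Pball p) ((fun a => x + a) ⁻¹' t) = μ.restrict (Pball p) t := by
  rw [Measure.restrict_apply ht, Measure.restrict_apply (measurable_const_add x ht),
    ← measure_preimage_add μ x (t ∩ Pball p)]
  congr 1
  ext a
  simp only [Set.mem_inter_iff, Set.mem_preimage]
  refine and_congr_right fun _ => ?_
  constructor
  · intro h
    exact lt_norm_add hx h
  · intro h
    have := lt_norm_add (a := -x) (by rwa [norm_neg]) h
    simpa [Pball] using this

lemma haar_unique (μ : Measure ℚ_[p]) [SigmaFinite μ] [μ.IsAddHaarMeasure]
    (ν : Measure (P1 p)) [IsProbabilityMeasure ν] (hν : IsGLInvariant p ν)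
    {t : Set ℚ_[p]} (ht : MeasurableSet t) :
    lam p ν t * μ (Pball p) = μ.restrict (Pball p) t * lam p ν Set.univ := by
  have hmeas : Measurable (Function.uncurry fun a x : ℚ_[p] =>
      t.indicator (fun _ => (1 : ENNReal)) (x + a)) := by
    exact (measurable_const.indicator ht).comp (measurable_snd.add measurable_fst)
  have hsw := lintegral_lintegral_swap (μ := μ.restrict (Pball p)) (ν := lam p ν)
    hmeas.aemeasurable
  have hl : ∫⁻ a, ∫⁻ x, t.indicator (fun _ => (1 : ENNReal)) (x + a) ∂(lam p ν)
      ∂(μ.restrict (Pball p)) = lam p ν t * μ (Pball p) := by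
    rw [← setLIntegral_const]
    refine setLIntegral_congr_fun Pball_open.measurableSet fun a ha => ?_
    show ∫⁻ x, t.indicator (fun _ => (1 : ENNReal)) (x + a) ∂(lam p ν) = _
    rw [← lam_translate ν hν a ha ht, ← lintegral_indicator_one (measurable_add_const a ht)]
    rfl
  have hr : ∫⁻ x, ∫⁻ a, t.indicator (fun _ => (1 : ENNReal)) (x + a)
      ∂(μ.restrict (Pball p)) ∂(lam p ν) = μ.restrict (Pball p) t * lam p ν Set.univ := by
    rw [← lintegral_const]
    refine lintegral_congr_ae ?_
    have hae : ∀ᵐ x ∂(lam p ν), x ∈ Pball p := by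
      rw [ae_iff]
      exact lam_compl ν
    filter_upwards [hae] with x hx
    rw [← mu_translate μ x hx ht, ← lintegral_indicator_one (measurable_const_add x ht)]
    rfl
  rw [← hl, ← hr]
  exact hsw

lemma mu_Pball (μ : Measure ℚ_[p]) [μ.IsAddHaarMeasure] (hμ : μ (Zball p) = 1) :
    (p : ENNReal) * μ (Pball p) = 1 := by
  rw [← hμ]
  have h1 : Zball p = ⋃ k ∈ Finset.range p, (fun x => (-(k : ℕ) : ℚ_[p]) + x) ⁻¹' (Pball p) := by
    ext x
    simp only [Set.mem_iUnion, Finset.mem_range, Set.mem_preimage]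
    constructor
    · intro hx
      obtain ⟨k, ⟨hk, hk'⟩, _⟩ := existsUnique_residue x hx
      refine ⟨k, hk, ?_⟩
      show ‖_‖ < 1
      rwa [neg_add_eq_sub]
    · rintro ⟨k, hk, hx⟩
      have hx' : ‖-(k : ℚ_[p]) + x‖ < 1 := hx
      have := Padic.nonarchimedean (k : ℚ_[p]) (-(k : ℚ_[p]) + x)
      rw [add_neg_cancel_left] at this
      exact this.trans (max_le (norm_nat_le _) hx'.le)
  rw [h1, measure_biUnion_finset]
  · simp only [measure_preimage_add]
    simp
  · intro k hk l hl hkl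
    simp at hk hl
    refine Set.disjoint_left.2 fun x h2 h3 => hkl ?_
    have h2' : ‖-(k : ℚ_[p]) + x‖ < 1 := h2
    have h3' : ‖-(l : ℚ_[p]) + x‖ < 1 := h3
    rw [neg_add_eq_sub] at h2' h3'
    by_contra hne
    have h4 := nat_sub_norm hl hk (Ne.symm hne)
    have h5 := lt_norm_add h2' (b := -(x - (l : ℚ_[p]))) (by rwa [norm_neg])
    have h6 : (x - k) + -(x - l) = (l : ℚ_[p]) - k := by ring
    rw [h6, h4] at h5
    exact lt_irrefl _ h5
  · intro k _
    exact measurable_const_add _ Pball_open.measurableSet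

lemma lam_eq (μ : Measure ℚ_[p]) [SigmaFinite μ] [μ.IsAddHaarMeasure] (hμ : μ (Zball p) = 1)
    (ν : Measure (P1 p)) [IsProbabilityMeasure ν] (hν : IsGLInvariant p ν) :
    lam p ν = ((p : NNReal) / (p + 1)) • μ.restrict (Pball p) := by
  ext t ht
  have h1 := haar_unique μ ν hν ht
  have h2 := mu_Pball μ hμ
  have h3 := lam_univ ν hν
  have hc : (((p : NNReal) / (p + 1) : NNReal) : ENNReal) = p * lam p ν Set.univ := by
    have h0 : ((p : NNReal) + 1) ≠ 0 := by positivity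
    rw [ENNReal.coe_div h0, mul_comm, ENNReal.div_eq_inv_mul]
    push_cast at h3 ⊢
    congr 1
    rw [ENNReal.eq_inv_of_mul_eq_one_left ((mul_comm _ _).trans h3)]
  rw [Measure.smul_apply, ENNReal.smul_def, smul_eq_mul, hc]
  calc lam p ν t = (p * μ (Pball p)) * lam p ν t := by rw [h2, one_mul]
    _ = p * (lam p ν t * μ (Pball p)) := by ring
    _ = _ := by rw [h1]; ring

end padic2
theorem statement_13 (p : ℕ) [Fact p.Prime]
    (μ : Measure ℚ_[p]) [SigmaFinite μ] [μ.IsAddHaarMeasure] (hμ : μ (Zball p) = 1)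
    (ν : Measure (P1 p)) [IsProbabilityMeasure ν] (hν : IsGLInvariant p ν)
    (β : ℝ) (hβ : 0 < β) (N : ℕ) :
    ZP1 p ν N (β : ℂ) / (N.factorial : ℂ) =
      ∑ n ∈ Finset.Nat.antidiagonalTuple (p + 1) N,
        ∏ k : Fin (p + 1),
          ((p : ℂ) / ((p : ℂ) + 1)) ^ (n k) * ZN p μ (Pball p) (n k) (β : ℂ) /
            ((n k).factorial : ℂ) := by
  have hfin : IsFiniteMeasure (μ.restrict (Pball p)) := by
    refine ⟨?_⟩
    rw [Measure.restrict_apply_univ]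
    refine lt_of_le_of_lt (measure_mono (t := Zball p) fun x (hx : ‖x‖ < 1) => (show ‖x‖ ≤ 1 from hx.le)) ?_
    rw [hμ]
    exact ENNReal.one_lt_top
  have hg : Measurable (fun q : ℚ_[p] × ℚ_[p] => (‖q.1 - q.2‖ : ℂ) ^ (β : ℂ)) :=
    (Complex.measurable_ofReal.comp (measurable_fst.sub measurable_snd).norm).pow_const _
  have h := main_generic (p + 1) N ν (((p : NNReal) / (p + 1)) • μ.restrict (Pball p)) Psi
    Psi_measurable (by rw [← lam_eq μ hμ ν hν]; exact map_Psi ν hν)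
    (fun x y => (‖x - y‖ : ℂ) ^ (β : ℂ)) hg
    (fun ξ η => ((pdelta p ξ η : ℝ) : ℂ) ^ (β : ℂ))
    (by
      intro ξ η
      rw [pdelta_eq]
      split_ifs <;> simp)
    (by
      intro ξ η
      rw [Complex.norm_cpow_real, Complex.norm_real, Real.norm_of_nonneg (pdelta_nonneg ξ η)]
      exact Real.rpow_le_one (pdelta_nonneg ξ η) (pdelta_le ξ η) hβ.le)
  have hW : ∀ n : ℕ, (∫ x : Fin n → ℚ_[p], ∏ q ∈ pairs n, (‖x q.1 - x q.2‖ : ℂ) ^ (β : ℂ)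
      ∂(Measure.pi fun _ => ((p : NNReal) / (p + 1)) • μ.restrict (Pball p))) =
      ((p : ℂ) / ((p : ℂ) + 1)) ^ n * ZN p μ (Pball p) n (β : ℂ) := by
    intro n
    rw [pi_const_smul, integral_smul_nnreal_measure, ZN, NNReal.smul_def, Complex.real_smul]
    push_cast
    rfl
  simp only [hW] at h
  rw [← count_sum (p + 1) N (fun n => ((p : ℂ) / ((p : ℂ) + 1)) ^ n * ZN p μ (Pball p) n (β : ℂ)),
    ← h]
  rfl

end LogCoulomb
end
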